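/- arXiv:2111.08048 — 7 statements merged into one kernel-verified Lean document; each statement's English description precedes it below -/
import Mathlib

section
/- There exists a function h' : ℕ⁴ → ℕ such that the following holds. Let E be a 2-stage stochastic matrix with n blocks and block dimensions r, s, t, and let I be any subset of its columns designated integral. Then every x ∈ ker_X(E) admits a one-fat decomposition x = h + g whose fat element h satisfies ‖h‖∞ ≤ h'(r, s, t, ‖E‖∞), independently of the number n of blocks. -/
/-!
After multiplying columns by signs, `x = (y, z₁, …, zₙ)` is nonnegative, and its blocks
`A y + B zᵢ = 0` come from a finite list of types depending on `r, s, t, ‖E‖∞` only. It suffices to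
find an integral `g₀ ≤ y` close to `y` such that for every type `τ`, every solution `z ≥ 0` of the
block can be rounded down to an integral solution with `g₀` in place of `y`. Since `g₀` is chosen
from `y` alone, the number of blocks is irrelevant.

For each type `τ`, the fiber `{z ≥ 0 | A y + B z = 0}` is spanned by finitely many points `v τ j`,
`j ∈ J`, together with its recession cone `{d ≥ 0 | B d = 0}`. The joint vector `(y, v)` is a
nonnegative solution of an integral homogeneous system whose size does not depend on `n`, hence
`(y, v) = ∑ w_C (G_C, V_C)` with `w_C ≥ 0` and finitely many nonnegative integral solutions
`(G_C, V_C)`. Let `g₀ = ∑ max(0, ⌊w_C⌋ - |J|) G_C`.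

A solution `z = ∑ μ_j v τ j + d` of a block of type `τ` expands to
`∑ μ_j w_C V_C(τ, j) + ∑ ρ_q H_q` with integral generators `H_q` of the recession cone. Since
`∑_j ⌊μ_j w_C⌋ ≥ ⌊w_C⌋ - |J|`, the coefficients `μ_j w_C` can be rounded down to integers with sum
`max(0, ⌊w_C⌋ - |J|)`; together with `⌊ρ_q⌋` they give an integral solution for `g₀`, and every
coefficient has decreased by at most `|J| + 1`.
-/

open Matrix BigOperators

/-- The ℓ₁-norm of a real vector. -/
def vnorm1 {ι : Type*} [Fintype ι] (x : ι → ℝ) : ℝ := ∑ i, |x i|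

/-- The largest absolute value of an entry of an integer matrix. -/
def matNormInf {R C : Type*} [Fintype R] [Fintype C] (E : Matrix R C ℤ) : ℕ :=
  Finset.univ.sup fun p : R × C => (E p.1 p.2).natAbs

/-- `x` is conformal to `y` : componentwise `|x i| ≤ |y i|` and `x i * y i ≥ 0`. -/
def ConformalTo {ι : Type*} (x y : ι → ℝ) : Prop :=
  ∀ i, |x i| ≤ |y i| ∧ 0 ≤ x i * y i

/-- The mixed kernel of an integer matrix `E` with integral columns `I`. -/
def MixedKer {R C : Type*} [Fintype C] [DecidableEq C]
    (E : Matrix R C ℤ) (I : Finset C) (x : C → ℝ) : Prop :=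
  (E.map (Int.cast : ℤ → ℝ)).mulVec x = 0 ∧ ∀ i ∈ I, ∃ z : ℤ, x i = z

/-- `g` is a circuit of the integer matrix `A` : nonzero, integral, in the kernel,
with coprime entries and inclusion-minimal support among nonzero kernel elements. -/
def IsCircuit {R C : Type*} [Fintype C] (A : Matrix R C ℤ) (g : C → ℤ) : Prop :=
  g ≠ 0 ∧ A.mulVec g = 0 ∧ (Finset.univ.gcd fun i => (g i).natAbs) = 1 ∧
  ∀ y : C → ℝ, y ≠ 0 → (A.map (Int.cast : ℤ → ℝ)).mulVec y = 0 →
    ¬ (Function.support y ⊂ Function.support fun i => ((g i : ℝ)))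

/-- Membership in the mixed Graver basis `G_X(E)` of `E` w.r.t. integral columns `I`. -/
def InMixedGraver {R C : Type*} [Fintype C] [DecidableEq C]
    (E : Matrix R C ℤ) (I : Finset C) (g : C → ℝ) : Prop :=
  (MixedKer E I g ∧ (∃ i ∈ I, g i ≠ 0) ∧
    ∀ y, MixedKer E I y → y ≠ 0 → y ≠ g → ¬ ConformalTo y g) ∨
  ((∀ i ∈ I, g i = 0) ∧
    ∃ gz : {i : C // i ∉ I} → ℤ, (∀ i : {i : C // i ∉ I}, g i.1 = gz i) ∧
      IsCircuit (E.submatrix id (Subtype.val : {i : C // i ∉ I} → C)) gz)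

/-- `x = h + g` is a one-fat decomposition of `x ∈ ker_X(E)` with fat element `h`. -/
def OneFatDecomp {R C : Type*} [Fintype C] [DecidableEq C]
    (E : Matrix R C ℤ) (I : Finset C) (x h g : C → ℝ) : Prop :=
  x = h + g ∧ ConformalTo h x ∧ ConformalTo g x ∧ MixedKer E I h ∧
  (E.map (Int.cast : ℤ → ℝ)).mulVec g = 0 ∧ (∀ i, ∃ z : ℤ, g i = z)

open Function Filter Topology

/-! ### Generators of cones and polyhedra over an ordered field -/

section Support

variable {C κ α 𝕜 : Type*}

lemma exists_support_representatives [Zero α] {𝒜 : Set (C → α)} (h𝒜 : 𝒜.Nonempty) :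
    ∃ G : Set C → C → α, (∀ S, G S ∈ 𝒜) ∧ ∀ p ∈ 𝒜, support (G (support p)) = support p := by
  have hrep (S : Set C) : ∃ g ∈ 𝒜, ∀ p ∈ 𝒜, support p = S → support g = S := by
    by_cases hS : ∃ p ∈ 𝒜, support p = S
    · obtain ⟨p, hp, hpS⟩ := hS
      exact ⟨p, hp, fun _ _ _ => hpS⟩
    · obtain ⟨p, hp⟩ := h𝒜
      exact ⟨p, hp, fun p' hp' hS' => absurd ⟨p', hp', hS'⟩ hS⟩
  choose G hG hsupp using hrep
  exact ⟨G, hG, fun p hp => hsupp _ p hp rfl⟩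

variable [Field 𝕜] [LinearOrder 𝕜] [IsStrictOrderedRing 𝕜] [Finite C]

lemma exists_nonneg_sub_smul_support_ssubset {x d : C → 𝕜} (hx : 0 ≤ x) (hd : 0 ≤ d)
    (hd0 : d ≠ 0) (hsupp : support d ⊆ support x) :
    ∃ u : 𝕜, 0 ≤ u ∧ 0 ≤ x - u • d ∧ support (x - u • d) ⊂ support x := by
  obtain ⟨j, hj, hmin⟩ := Set.exists_min_image (support d) (fun i => x i / d i)
    (Set.toFinite _) (support_nonempty_iff.2 hd0)
  refine ⟨x j / d j, div_nonneg (hx j) (hd j), fun i => ?_, fun i hi hxi => ?_, fun h => ?_⟩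
  · by_cases hi : d i = 0
    · simpa [hi] using hx i
    · have hdi : 0 < d i := (hd i).lt_of_ne' hi
      exact sub_nonneg.2 ((le_div_iff₀ hdi).1 (hmin i hi))
  · have hdi : d i = 0 := of_not_not fun hdi => hsupp hdi hxi
    simp [hxi, hdi] at hi
  · exact h (hsupp hj) (by simp [div_mul_cancel₀ (x j) hj])

lemma exists_nonneg_combination [Fintype κ] {K : Submodule 𝕜 (C → 𝕜)} {G : κ → C → 𝕜}
    (hGK : ∀ j, G j ∈ K) (hG : ∀ j, 0 ≤ G j)
    (hsupp : ∀ x ∈ K, 0 ≤ x → ∃ j, support (G j) = support x) {x : C → 𝕜} (hxK : x ∈ K)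
    (hx : 0 ≤ x) : ∃ w : κ → 𝕜, 0 ≤ w ∧ x = ∑ j, w j • G j := by
  classical
  induction hS : support x using WellFoundedLT.induction generalizing x with
  | ind S ih =>
    by_cases hx0 : x = 0
    · exact ⟨0, le_rfl, by simp [hx0]⟩
    obtain ⟨j, hj⟩ := hsupp x hxK hx
    have hGj : G j ≠ 0 := by rwa [← support_nonempty_iff, hj, support_nonempty_iff]
    obtain ⟨u, hu, hnonneg, hlt⟩ := exists_nonneg_sub_smul_support_ssubset hx (hG j) hGj hj.subset
    obtain ⟨w, hw, hxw⟩ := ih _ (hS ▸ hlt) (K.sub_mem hxK (K.smul_mem u (hGK j))) hnonneg rfl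
    refine ⟨w + Pi.single j u, add_nonneg hw (Pi.single_nonneg.2 hu), ?_⟩
    simp [add_smul, Finset.sum_add_distrib, ← hxw, Pi.single_apply, ite_smul]

end Support

section Fibers

variable {K L 𝕜 : Type*} [Fintype L] [Field 𝕜] [LinearOrder 𝕜] [IsStrictOrderedRing 𝕜]

lemma exists_fiber_generators (B : Matrix K L 𝕜) (b : K → 𝕜) :
    ∃ (v : Set (L ⊕ Unit) → L → 𝕜) (t : Set (L ⊕ Unit) → 𝕜),
      (∀ S, 0 ≤ v S ∧ 0 ≤ t S ∧ B *ᵥ v S = t S • b) ∧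
      ∀ z, 0 ≤ z → B *ᵥ z = b →
        ∃ w : Set (L ⊕ Unit) → 𝕜, 0 ≤ w ∧ ∑ S, w S * t S = 1 ∧ z = ∑ S, w S • v S := by
  -- Homogenization: `B *ᵥ z = b` says that `(z, 1)` lies in the cone `{(z, t) | B *ᵥ z = t • b}`.
  let cone : Submodule 𝕜 (L ⊕ Unit → 𝕜) :=
    LinearMap.ker (fromCols B (replicateCol Unit (-b))).mulVecLin
  have mem_cone (p : L ⊕ Unit → 𝕜) :
      p ∈ cone ↔ B *ᵥ (p ∘ Sum.inl) = p (Sum.inr ()) • b := by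
    rw [LinearMap.mem_ker, mulVecLin_apply, fromCols_mulVec, add_eq_zero_iff_eq_neg]
    congr! 1
    ext k
    simp [mulVec, dotProduct, mul_comm]
  obtain ⟨G, hG, hsupp⟩ :=
    exists_support_representatives (𝒜 := {p | p ∈ cone ∧ 0 ≤ p}) ⟨0, cone.zero_mem, le_rfl⟩
  refine ⟨fun S => G S ∘ Sum.inl, fun S => G S (Sum.inr ()), fun S =>
    ⟨fun l => (hG S).2 (Sum.inl l), (hG S).2 (Sum.inr ()), (mem_cone _).1 (hG S).1⟩,
    fun z hz hBz => ?_⟩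
  obtain ⟨w, hw, hzw⟩ := exists_nonneg_combination (fun S => (hG S).1) (fun S => (hG S).2)
    (fun p hp hp0 => ⟨support p, hsupp p ⟨hp, hp0⟩⟩)
    (x := Sum.elim z fun _ => 1) ((mem_cone _).2 (by simp [hBz]))
    (by rintro (l | _); exacts [hz l, zero_le_one])
  refine ⟨w, hw, by simpa using (congrFun hzw (Sum.inr ())).symm, funext fun l => ?_⟩
  simpa using congrFun hzw (Sum.inl l)

lemma exists_minkowskiWeyl_decomposition {B : Matrix K L 𝕜} {b : K → 𝕜}
    (hne : ∃ z, 0 ≤ z ∧ B *ᵥ z = b) :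
    ∃ v : Set (L ⊕ Unit) → L → 𝕜, (∀ S, 0 ≤ v S ∧ B *ᵥ v S = b) ∧
      ∀ z, 0 ≤ z → B *ᵥ z = b →
        ∃ (μ : Set (L ⊕ Unit) → 𝕜) (d : L → 𝕜), 0 ≤ μ ∧ ∑ S, μ S = 1 ∧
          0 ≤ d ∧ B *ᵥ d = 0 ∧ z = ∑ S, μ S • v S + d := by
  obtain ⟨z₀, hz₀, hBz₀⟩ := hne
  obtain ⟨u, t, hut, hgen⟩ := exists_fiber_generators B b
  -- A generator with `t S = 0` is a recession direction; any point of the fiber serves for it.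
  have hpoint (S) : ∃ v, (0 ≤ v ∧ B *ᵥ v = b) ∧ t S • v ≤ u S := by
    obtain ⟨hu, ht, hBu⟩ := hut S
    rcases ht.eq_or_lt with ht0 | htpos
    · exact ⟨z₀, ⟨hz₀, hBz₀⟩, by rwa [← ht0, zero_smul]⟩
    · refine ⟨(t S)⁻¹ • u S, ⟨smul_nonneg (inv_nonneg.2 ht) hu, ?_⟩, ?_⟩
      · rw [mulVec_smul, hBu, inv_smul_smul₀ htpos.ne']
      · rw [smul_inv_smul₀ htpos.ne']
  choose v hv hvu using hpoint
  refine ⟨v, hv, fun z hz hBz => ?_⟩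
  obtain ⟨w, hw, hsum, rfl⟩ := hgen z hz hBz
  refine ⟨fun S => w S * t S, ∑ S, w S • (u S - t S • v S),
    fun S => mul_nonneg (hw S) (hut S).2.1, hsum,
    Finset.sum_nonneg fun S _ => smul_nonneg (hw S) (sub_nonneg.2 (hvu S)), ?_, ?_⟩
  · simp [mulVec_sum, mulVec_smul, mulVec_sub, (hut _).2.2, (hv _).2]
  · simp [smul_sub, mul_smul]

end Fibers

/-! ### Integral generators of rational cones -/

lemma exists_nat_forall_abs_sub_round_lt {ι : Type*} [Finite ι] (x : ι → ℝ) {ε : ℝ} (hε : 0 < ε) :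
    ∃ q : ℕ, 0 < q ∧ ∀ i, |q * x i - round (q * x i)| < ε := by
  have hnhds : ∀ᶠ t in 𝓝 (0 : ι → UnitAddCircle), ∀ i, ‖t i‖ < ε :=
    eventually_all.2 fun i =>
      (continuous_apply i).norm.continuousAt.eventually_lt continuousAt_const (by simpa using hε)
  obtain ⟨q, hq, hpos⟩ :=
    (((mapClusterPt_zero_atTop_nsmul fun i => (x i : UnitAddCircle)).frequently
      hnhds).and_eventually (eventually_gt_atTop 0)).exists
  refine ⟨q, hpos, fun i => ?_⟩
  have hqi : ((q * x i : ℝ) : UnitAddCircle) = q • (x i : UnitAddCircle) := by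
    rw [← nsmul_eq_mul]; rfl
  rw [← UnitAddCircle.norm_eq, hqi]
  exact hq i

lemma intCast_comp_mulVec {R C α : Type*} [Ring α] [Fintype C] (M : Matrix R C ℤ) (p : C → ℤ) :
    (Int.cast ∘ (M *ᵥ p) : R → α) = M.map Int.cast *ᵥ (Int.cast ∘ p) :=
  funext fun r => (Int.castRingHom α).map_mulVec M p r

lemma mulVec_eq_zero_of_abs_sub_intCast_le {R C : Type*} [Fintype C] {M : Matrix R C ℤ}
    {x : C → ℝ} (hMx : M.map (Int.cast : ℤ → ℝ) *ᵥ x = 0) {p : C → ℤ} {ε : ℝ}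
    (hp : ∀ c, |x c - p c| ≤ ε) (hε : ∀ r, (∑ c, |(M r c : ℝ)|) * ε < 1) : M *ᵥ p = 0 := by
  ext r
  have hMp : (((M *ᵥ p) r : ℤ) : ℝ) = -∑ c, M r c * (x c - p c) := by
    have hker : ∑ c, (M r c : ℝ) * x c = 0 := congrFun hMx r
    simp only [mul_sub, Finset.sum_sub_distrib, hker]
    simp [mulVec, dotProduct]
  have hlt : |(((M *ᵥ p) r : ℤ) : ℝ)| < 1 := by
    rw [hMp, abs_neg]
    calc |∑ c, M r c * (x c - p c)| ≤ ∑ c, |M r c * (x c - p c)| :=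
          Finset.abs_sum_le_sum_abs _ _
      _ ≤ ∑ c, |(M r c : ℝ)| * ε := Finset.sum_le_sum fun c _ => by
          rw [abs_mul]; gcongr; exact hp c
      _ < 1 := by rw [← Finset.sum_mul]; exact hε r
  exact Int.abs_lt_one_iff.1 (by exact_mod_cast hlt)

lemma exists_int_mulVec_eq_zero_support_eq {R C : Type*} [Finite R] [Fintype C]
    (M : Matrix R C ℤ) {x : C → ℝ} (hx : 0 ≤ x) (hMx : M.map (Int.cast : ℤ → ℝ) *ᵥ x = 0) :
    ∃ p : C → ℤ, 0 ≤ p ∧ M *ᵥ p = 0 ∧ support p = support x := by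
  -- By simultaneous approximation, some `q • x` is close to an integral vector `p`; for a small
  -- enough error, `p` is positive on the support of `x` and lies in the kernel.
  have hsmall : ∀ᶠ ε in 𝓝[>] (0 : ℝ),
      (∀ c, 0 < x c → ε < x c) ∧ ∀ r, (∑ c, |(M r c : ℝ)|) * ε < 1 := by
    refine .and (eventually_all.2 fun c => ?_) (eventually_all.2 fun r => ?_)
    · by_cases hc : 0 < x c
      · exact ((eventually_lt_nhds hc).filter_mono nhdsWithin_le_nhds).mono fun _ h _ => h
      · exact .of_forall fun _ h => absurd h hc
    · refine Eventually.filter_mono nhdsWithin_le_nhds ?_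
      exact (continuous_const_mul _).continuousAt.eventually_lt continuousAt_const (by simp)
  obtain ⟨ε, ⟨hεx, hεM⟩, hε⟩ := (hsmall.and self_mem_nhdsWithin).exists
  obtain ⟨q, hq, hclose⟩ := exists_nat_forall_abs_sub_round_lt x hε
  let p (c : C) : ℤ := round (q * x c)
  have hpos (c) (hc : 0 < x c) : 0 < p c := by
    have hqx : x c ≤ q * x c := le_mul_of_one_le_left (hx c) (by exact_mod_cast hq)
    have : (0 : ℝ) < p c := by linarith [(abs_lt.1 (hclose c)).2, hεx c hc]
    exact_mod_cast this
  have hzero (c) (hc : x c = 0) : p c = 0 := by simp [p, hc]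
  refine ⟨p, fun c => ?_, ?_, ?_⟩
  · rcases (hx c).eq_or_lt with hc | hc
    exacts [(hzero c hc.symm).ge, (hpos c hc).le]
  · have hMqx : M.map (Int.cast : ℤ → ℝ) *ᵥ ((q : ℝ) • x) = 0 := by
      rw [mulVec_smul, hMx, smul_zero]
    exact mulVec_eq_zero_of_abs_sub_intCast_le hMqx (fun c => (hclose c).le) hεM
  · ext c
    exact not_congr ⟨fun hp => of_not_not fun hc => (hpos c ((hx c).lt_of_ne' hc)).ne' hp, hzero c⟩

/-- The family `G` consists of nonnegative integral vectors of the kernel of `M` and generates the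
cone of all nonnegative real vectors in that kernel. -/
structure IsIntegralGenerators {R C κ : Type*} [Fintype C] [Fintype κ] (M : Matrix R C ℤ)
    (G : κ → C → ℤ) : Prop where
  nonneg : ∀ j, 0 ≤ G j
  mulVec_eq_zero : ∀ j, M *ᵥ G j = 0
  exists_combination : ∀ x : C → ℝ, 0 ≤ x → M.map (Int.cast : ℤ → ℝ) *ᵥ x = 0 →
    ∃ w : κ → ℝ, 0 ≤ w ∧ x = ∑ j, w j • (Int.cast ∘ G j)

lemma exists_isIntegralGenerators {R C : Type*} [Finite R] [Fintype C] (M : Matrix R C ℤ) :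
    ∃ G : Set C → C → ℤ, IsIntegralGenerators M G := by
  obtain ⟨G, hG, hsupp⟩ := exists_support_representatives (𝒜 := {p | 0 ≤ p ∧ M *ᵥ p = 0})
    ⟨0, le_rfl, mulVec_zero M⟩
  refine ⟨G, fun S => (hG S).1, fun S => (hG S).2, fun x hx hMx => ?_⟩
  refine exists_nonneg_combination (K := LinearMap.ker (M.map (Int.cast : ℤ → ℝ)).mulVecLin)
    (G := fun S => Int.cast ∘ G S) (fun S => ?_) (fun S c => Int.cast_nonneg ((hG S).1 c))
    (fun y hy hy0 => ?_) hMx hx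
  · rw [LinearMap.mem_ker, mulVecLin_apply, ← intCast_comp_mulVec, (hG S).2]
    exact funext fun _ => Int.cast_zero
  · obtain ⟨p, hp, hMp, hpy⟩ := exists_int_mulVec_eq_zero_support_eq M hy0 hy
    refine ⟨support p, ?_⟩
    rw [support_comp_eq Int.cast Int.cast_eq_zero, hsupp p ⟨hp, hMp⟩, hpy]

/-! ### Rounding down -/

/-- The integral vector `g` arises from the nonnegative real vector `x` by decreasing every entry by
at most `D`, staying nonnegative. -/
structure IsIntRounding {ι : Type*} (D : ℝ) (x : ι → ℝ) (g : ι → ℤ) : Prop where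
  nonneg : 0 ≤ g
  le : ∀ i, (g i : ℝ) ≤ x i
  sub_le : ∀ i, x i - g i ≤ D

namespace IsIntRounding

variable {ι κ : Type*} {D D' : ℝ} {x x' : ι → ℝ} {g g' : ι → ℤ}

lemma mono (hg : IsIntRounding D x g) (hD : D ≤ D') : IsIntRounding D' x g :=
  ⟨hg.nonneg, hg.le, fun i => (hg.sub_le i).trans hD⟩

lemma add (hg : IsIntRounding D x g) (hg' : IsIntRounding D' x' g') :
    IsIntRounding (D + D') (x + x') (g + g') where
  nonneg := add_nonneg hg.nonneg hg'.nonneg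
  le i := by simpa using add_le_add (hg.le i) (hg'.le i)
  sub_le i := by
    simpa [add_sub_add_comm] using add_le_add (hg.sub_le i) (hg'.sub_le i)

lemma sum_smul [Fintype κ] {w : κ → ℝ} {m : κ → ℕ} {G : κ → ι → ℤ} {c : ℝ} (hc : 0 ≤ c)
    (hG : ∀ j, 0 ≤ G j) (hGD : ∀ i, ∑ j, (G j i : ℝ) ≤ D) (hm : ∀ j, (m j : ℝ) ≤ w j)
    (hmc : ∀ j, w j - m j ≤ c) :
    IsIntRounding (c * D) (∑ j, w j • (Int.cast ∘ G j)) (∑ j, m j • G j) := by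
  have hG' (j i) : (0 : ℝ) ≤ G j i := Int.cast_nonneg (hG j i)
  have hw_apply (i) : (∑ j, w j • (Int.cast ∘ G j : ι → ℝ)) i = ∑ j, w j * (G j i : ℝ) := by simp
  have hm_apply (i) : (((∑ j, m j • G j) i : ℤ) : ℝ) = ∑ j, (m j : ℝ) * (G j i : ℝ) := by simp
  refine ⟨Finset.sum_nonneg fun j _ => nsmul_nonneg (hG j) _, fun i => ?_, fun i => ?_⟩
  · rw [hw_apply, hm_apply]
    exact Finset.sum_le_sum fun j _ => mul_le_mul_of_nonneg_right (hm j) (hG' j i)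
  · calc (∑ j, w j • (Int.cast ∘ G j : ι → ℝ)) i - ((∑ j, m j • G j) i : ℤ)
        = ∑ j, (w j - m j) * (G j i : ℝ) := by
          simp only [hw_apply, hm_apply, sub_mul, Finset.sum_sub_distrib]
      _ ≤ ∑ j, c * (G j i : ℝ) :=
        Finset.sum_le_sum fun j _ => mul_le_mul_of_nonneg_right (hmc j) (hG' j i)
      _ ≤ c * D := by rw [← Finset.mul_sum]; exact mul_le_mul_of_nonneg_left (hGD i) hc

end IsIntRounding

lemma exists_le_sum_eq {J : Type*} [Fintype J] {f : J → ℕ} {n : ℕ} (hn : n ≤ ∑ j, f j) :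
    ∃ m ≤ f, ∑ j, m j = n := by
  obtain ⟨m, hm, hsum⟩ := Finsupp.exists_le_degree_eq (Finsupp.equivFunOnFinite.symm f) n
    (by simpa [Finsupp.degree_eq_sum] using hn)
  exact ⟨m, hm, by rw [← hsum, Finsupp.degree_eq_sum]⟩

section Floor

variable {𝕜 : Type*} [Field 𝕜] [LinearOrder 𝕜] [IsStrictOrderedRing 𝕜] [FloorSemiring 𝕜]

-- The truncated difference `⌊w⌋₊ - card J` does not depend on `μ`: different blocks, with different
-- convex coefficients, can therefore share it as the rounding of `w`.
lemma exists_le_mul_sum_eq_natFloor_sub_card {J : Type*} [Fintype J] {μ : J → 𝕜} (hμ : 0 ≤ μ)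
    (hsum : ∑ j, μ j = 1) {w : 𝕜} (hw : 0 ≤ w) :
    ∃ m : J → ℕ, (∀ j, (m j : 𝕜) ≤ μ j * w) ∧ ∑ j, m j = ⌊w⌋₊ - Fintype.card J := by
  have hfloor : ⌊w⌋₊ - Fintype.card J ≤ ∑ j, ⌊μ j * w⌋₊ := by
    rw [Nat.sub_le_iff_le_add]
    have : (⌊w⌋₊ : 𝕜) ≤ ∑ j, (⌊μ j * w⌋₊ : 𝕜) + Fintype.card J :=
      calc (⌊w⌋₊ : 𝕜) ≤ w := Nat.floor_le hw
        _ = ∑ j, μ j * w := by rw [← Finset.sum_mul, hsum, one_mul]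
        _ ≤ ∑ j, ((⌊μ j * w⌋₊ : 𝕜) + 1) := Finset.sum_le_sum fun j _ => (Nat.lt_floor_add_one _).le
        _ = ∑ j, (⌊μ j * w⌋₊ : 𝕜) + Fintype.card J := by simp [Finset.sum_add_distrib]
    exact_mod_cast this
  obtain ⟨m, hm, hmsum⟩ := exists_le_sum_eq hfloor
  exact ⟨m, fun j => (Nat.cast_le.2 (hm j)).trans (Nat.floor_le (mul_nonneg (hμ j) hw)), hmsum⟩

lemma sub_natFloor_sub_le (w : 𝕜) (N : ℕ) : w - ((⌊w⌋₊ - N : ℕ) : 𝕜) ≤ N + 1 := by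
  have : (⌊w⌋₊ : 𝕜) ≤ ((⌊w⌋₊ - N : ℕ) : 𝕜) + N := by exact_mod_cast le_tsub_add
  linarith [Nat.lt_floor_add_one w]

lemma natFloor_sub_le {w : 𝕜} (hw : 0 ≤ w) (N : ℕ) : ((⌊w⌋₊ - N : ℕ) : 𝕜) ≤ w :=
  (Nat.cast_le.2 (Nat.sub_le _ _)).trans (Nat.floor_le hw)

end Floor

/-! ### Two-stage systems -/

section TwoStage

variable {T K P L : Type*}

/-- The block matrix of the system `A i *ᵥ y + B i *ᵥ z i = 0`, `i : T`, in global unknowns `y` and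
local unknowns `z i`. -/
def twoStage {R : Type*} [Zero R] [DecidableEq T] (A : T → Matrix K P R) (B : T → Matrix K L R) :
    Matrix (T × K) (P ⊕ T × L) R :=
  .of fun p => Sum.elim (A p.1 p.2) fun q => if q.1 = p.1 then B p.1 p.2 q.2 else 0

lemma twoStage_map {R S : Type*} [Zero R] [Zero S] [DecidableEq T] {f : R → S} (hf : f 0 = 0)
    (A : T → Matrix K P R) (B : T → Matrix K L R) :
    (twoStage A B).map f = twoStage (fun i => (A i).map f) fun i => (B i).map f := by
  ext p (q | q)
  · rfl
  · simp [twoStage, apply_ite f, hf]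

lemma eq_twoStage {R : Type*} [Zero R] [DecidableEq T] {E : Matrix (T × K) (P ⊕ T × L) R}
    (hE : ∀ i k j l, j ≠ i → E (i, k) (.inr (j, l)) = 0) :
    E = twoStage (fun i => E.submatrix (Prod.mk i) .inl)
      fun i => E.submatrix (Prod.mk i) fun l => .inr (i, l) := by
  ext ⟨i, k⟩ (p | ⟨j, l⟩)
  · rfl
  · by_cases hji : j = i
    · simp [twoStage, hji]
    · simp [twoStage, hji, hE i k j l hji]

variable [Fintype P] [Fintype L]

lemma twoStage_mulVec_eq_zero_iff {R : Type*} [Semiring R] [DecidableEq T] [Fintype T]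
    {A : T → Matrix K P R} {B : T → Matrix K L R} {x : P ⊕ T × L → R} :
    twoStage A B *ᵥ x = 0 ↔
      ∀ i, A i *ᵥ (fun p => x (.inl p)) + B i *ᵥ (fun l => x (.inr (i, l))) = 0 := by
  simp [funext_iff, mulVec, dotProduct, twoStage, Fintype.sum_prod_type_right, ite_mul]

lemma exists_twoStage_generators [Fintype T] [Finite K] (A : T → Matrix K P ℤ)
    (B : T → Matrix K L ℤ) :
    ∃ (G : Set (P ⊕ T × L) → P → ℤ) (V : Set (P ⊕ T × L) → T → L → ℤ),
      (∀ C, 0 ≤ G C ∧ ∀ i, 0 ≤ V C i ∧ A i *ᵥ G C + B i *ᵥ V C i = 0) ∧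
      ∀ (y : P → ℝ) (v : T → L → ℝ), 0 ≤ y →
        (∀ i, 0 ≤ v i ∧ (A i).map Int.cast *ᵥ y + (B i).map Int.cast *ᵥ v i = 0) →
        ∃ w : Set (P ⊕ T × L) → ℝ, 0 ≤ w ∧ y = ∑ C, w C • (Int.cast ∘ G C) ∧
          ∀ i, v i = ∑ C, w C • (Int.cast ∘ V C i) := by
  classical
  obtain ⟨G, hG⟩ := exists_isIntegralGenerators (twoStage A B)
  refine ⟨fun C p => G C (.inl p), fun C i l => G C (.inr (i, l)),
    fun C => ⟨fun p => hG.nonneg C _, fun i => ⟨fun l => hG.nonneg C _,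
      twoStage_mulVec_eq_zero_iff.1 (hG.mulVec_eq_zero C) i⟩⟩, fun y v hy hv => ?_⟩
  obtain ⟨w, hw, hyv⟩ := hG.exists_combination (Sum.elim y fun q => v q.1 q.2)
    (by rintro (p | ⟨i, l⟩); exacts [hy p, (hv i).1 l])
    (by
      rw [twoStage_map Int.cast_zero, twoStage_mulVec_eq_zero_iff]
      exact fun i => (hv i).2)
  exact ⟨w, hw, funext fun p => by simpa using congrFun hyv (.inl p),
    fun i => funext fun l => by simpa using congrFun hyv (.inr (i, l))⟩

lemma exists_block_rounding {J κ σ : Type*} [Fintype J] [Fintype κ] [Fintype σ]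
    {A : Matrix K P ℤ} {B : Matrix K L ℤ} {G : κ → P → ℤ} {V : κ → J → L → ℤ} {H : σ → L → ℤ}
    (hV : ∀ C j, 0 ≤ V C j) (hH : ∀ q, 0 ≤ H q)
    (hGV : ∀ C j, A *ᵥ G C + B *ᵥ V C j = 0) (hBH : ∀ q, B *ᵥ H q = 0) {D : ℝ}
    (hVD : ∀ l, ∑ p : κ × J, (V p.1 p.2 l : ℝ) ≤ D) (hHD : ∀ l, ∑ q, (H q l : ℝ) ≤ D)
    {w : κ → ℝ} (hw : 0 ≤ w) {μ : J → ℝ} (hμ : 0 ≤ μ) (hsum : ∑ j, μ j = 1)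
    {ρ : σ → ℝ} (hρ : 0 ≤ ρ) :
    ∃ g : L → ℤ,
      IsIntRounding ((Fintype.card J + 2) * D)
        (∑ j, μ j • ∑ C, w C • (Int.cast ∘ V C j) + ∑ q, ρ q • (Int.cast ∘ H q)) g ∧
      A *ᵥ (∑ C, (⌊w C⌋₊ - Fintype.card J) • G C) + B *ᵥ g = 0 := by
  choose m hm hmsum using fun C => exists_le_mul_sum_eq_natFloor_sub_card hμ hsum (hw C)
  have hm_error (C j) : μ j * w C - m C j ≤ Fintype.card J + 1 :=
    calc μ j * w C - m C j ≤ ∑ i, (μ i * w C - m C i) :=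
          Finset.single_le_sum (f := fun i => μ i * w C - m C i)
            (fun i _ => sub_nonneg.2 (hm C i)) (Finset.mem_univ j)
      _ = w C - ((⌊w C⌋₊ - Fintype.card J : ℕ) : ℝ) := by
          rw [Finset.sum_sub_distrib, ← Finset.sum_mul, hsum, one_mul, ← hmsum C, Nat.cast_sum]
      _ ≤ Fintype.card J + 1 := sub_natFloor_sub_le _ _
  have hconvex : IsIntRounding ((Fintype.card J + 1) * D)
      (∑ p : κ × J, (μ p.2 * w p.1) • (Int.cast ∘ V p.1 p.2))
      (∑ p : κ × J, m p.1 p.2 • V p.1 p.2) :=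
    .sum_smul (by positivity) (fun p => hV p.1 p.2) hVD (fun p => hm p.1 p.2)
      fun p => hm_error p.1 p.2
  have hrecession : IsIntRounding (1 * D) (∑ q, ρ q • (Int.cast ∘ H q)) (∑ q, ⌊ρ q⌋₊ • H q) :=
    .sum_smul zero_le_one hH hHD (fun q => Nat.floor_le (hρ q)) fun q => by
      linarith [Nat.lt_floor_add_one (ρ q)]
  refine ⟨∑ p : κ × J, m p.1 p.2 • V p.1 p.2 + ∑ q, ⌊ρ q⌋₊ • H q, ?_, ?_⟩
  · convert! hconvex.add hrecession using 1
    · ring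
    · congr 1
      simp only [Finset.smul_sum, smul_smul]
      rw [Finset.sum_comm, Fintype.sum_prod_type]
  · have hBV (C j) : B *ᵥ V C j = -(A *ᵥ G C) := eq_neg_of_add_eq_zero_right (hGV C j)
    simp only [mulVec_add, mulVec_sum, mulVec_smul, hBV, hBH, smul_zero, Finset.sum_const_zero,
      add_zero, Fintype.sum_prod_type, ← Finset.sum_smul, hmsum, smul_neg, Finset.sum_neg_distrib,
      add_neg_cancel]

lemma exists_uniform_rounding_of_feasible [Finite T] [Finite K] (A : T → Matrix K P ℤ)
    (B : T → Matrix K L ℤ) :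
    ∃ D : ℝ, ∀ y : P → ℝ, 0 ≤ y →
      (∀ τ, ∃ z, 0 ≤ z ∧ (A τ).map Int.cast *ᵥ y + (B τ).map Int.cast *ᵥ z = 0) →
      ∃ g₀, IsIntRounding D y g₀ ∧
        ∀ τ z, 0 ≤ z → (A τ).map Int.cast *ᵥ y + (B τ).map Int.cast *ᵥ z = 0 →
          ∃ g, IsIntRounding D z g ∧ A τ *ᵥ g₀ + B τ *ᵥ g = 0 := by
  have := Fintype.ofFinite T
  let J := Set (L ⊕ Unit)
  -- One global vector together with one local vector for each spanning point of each fiber.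
  obtain ⟨G, V, hGV, hgen⟩ :=
    exists_twoStage_generators (fun p : T × J => A p.1) fun p => B p.1
  choose H hH using fun τ => exists_isIntegralGenerators (B τ)
  obtain ⟨D, hD⟩ := Finite.exists_le (Sum.elim (fun p => ∑ C, (G C p : ℝ))
    (Sum.elim (fun q : T × L => ∑ p : _ × J, (V p.1 (q.1, p.2) q.2 : ℝ))
      fun q : T × L => ∑ S, (H q.1 S q.2 : ℝ)))
  refine ⟨(Fintype.card J + 2) * D, fun y hy hfeas => ?_⟩
  have hsolves (τ z) : (A τ).map Int.cast *ᵥ y + (B τ).map Int.cast *ᵥ z = 0 ↔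
      (B τ).map Int.cast *ᵥ z = -((A τ).map Int.cast *ᵥ y) := add_eq_zero_iff_eq_neg'
  simp only [hsolves] at hfeas hgen ⊢
  choose v hv hfiber using fun τ => exists_minkowskiWeyl_decomposition (hfeas τ)
  obtain ⟨w, hw, rfl, hvw⟩ := hgen y (fun p => v p.1 p.2) hy fun p =>
    ⟨(hv p.1 p.2).1, (hsolves _ _).2 (hv p.1 p.2).2⟩
  refine ⟨∑ C, (⌊w C⌋₊ - Fintype.card J) • G C, ?_, fun τ z hz hBz => ?_⟩
  · exact .sum_smul (by positivity) (fun C => (hGV C).1) (fun p => hD (.inl p))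
      (fun C => natFloor_sub_le (hw C) _)
      fun C => by linarith [sub_natFloor_sub_le (w C) (Fintype.card J)]
  · obtain ⟨μ, d, hμ, hsum, hd, hBd, rfl⟩ := hfiber τ z hz hBz
    obtain ⟨ρ, hρ, rfl⟩ := (hH τ).exists_combination d hd hBd
    simp only [hvw (τ, _)]
    exact exists_block_rounding (V := fun C j => V C (τ, j)) (fun C j => ((hGV C).2 (τ, j)).1)
      (hH τ).nonneg (fun C j => ((hGV C).2 (τ, j)).2) (hH τ).mulVec_eq_zero
      (fun l => hD (.inr (.inl (τ, l)))) (fun l => hD (.inr (.inr (τ, l)))) hw hμ hsum hρ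

-- Types with an empty fiber have no spanning points, but also impose no condition: only the
-- feasible ones enter the system, at the price of one bound for every set of types.
lemma exists_uniform_rounding [Finite T] [Finite K] (A : T → Matrix K P ℤ)
    (B : T → Matrix K L ℤ) :
    ∃ D : ℝ, ∀ y : P → ℝ, 0 ≤ y → ∃ g₀, IsIntRounding D y g₀ ∧
      ∀ τ z, 0 ≤ z → (A τ).map Int.cast *ᵥ y + (B τ).map Int.cast *ᵥ z = 0 →
        ∃ g, IsIntRounding D z g ∧ A τ *ᵥ g₀ + B τ *ᵥ g = 0 := by
  choose D hD using fun F : Set T =>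
    exists_uniform_rounding_of_feasible (fun τ : F => A τ) fun τ : F => B τ
  obtain ⟨D', hDD'⟩ := Finite.exists_le D
  refine ⟨D', fun y hy => ?_⟩
  let feasible : Set T := {τ | ∃ z, 0 ≤ z ∧ (A τ).map Int.cast *ᵥ y + (B τ).map Int.cast *ᵥ z = 0}
  obtain ⟨g₀, hg₀, hblock⟩ := hD feasible y hy fun τ => τ.2
  refine ⟨g₀, hg₀.mono (hDD' _), fun τ z hz hABz => ?_⟩
  obtain ⟨g, hg, hABg⟩ := hblock ⟨τ, z, hz, hABz⟩ z hz hABz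
  exact ⟨g, hg.mono (hDD' _), hABg⟩

end TwoStage

lemma finite_setOf_abs_entries_le {K L : Type*} [Finite K] [Finite L] (Δ : ℕ) :
    {A : Matrix K L ℤ | ∀ k l, |A k l| ≤ Δ}.Finite :=
  (Set.Finite.pi' fun _ => Set.Finite.pi' fun _ => Set.finite_Icc (-Δ : ℤ) Δ).subset
    fun _ hA k l => abs_le.1 (hA k l)

lemma exists_rounding_of_abs_entries_le (K P L : Type*) [Finite K] [Fintype P] [Fintype L]
    (Δ : ℕ) :
    ∃ D : ℝ, ∀ {T : Type*} [Fintype T] (E : Matrix (T × K) (P ⊕ T × L) ℤ),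
      (∀ i k j l, j ≠ i → E (i, k) (.inr (j, l)) = 0) → (∀ p c, |E p c| ≤ Δ) →
      ∀ x, 0 ≤ x → E.map Int.cast *ᵥ x = 0 → ∃ g, IsIntRounding D x g ∧ E *ᵥ g = 0 := by
  classical
  have := (finite_setOf_abs_entries_le (K := K) (L := P) Δ).to_subtype
  have := (finite_setOf_abs_entries_le (K := K) (L := L) Δ).to_subtype
  obtain ⟨D, hD⟩ := exists_uniform_rounding
    (T := {A : Matrix K P ℤ | ∀ k p, |A k p| ≤ Δ} × {B : Matrix K L ℤ | ∀ k l, |B k l| ≤ Δ})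
    (fun τ => τ.1.1) fun τ => τ.2.1
  refine ⟨D, fun E hE hΔ x hx hEx => ?_⟩
  rw [eq_twoStage hE, twoStage_map Int.cast_zero, twoStage_mulVec_eq_zero_iff] at hEx
  obtain ⟨g₀, hg₀, hblock⟩ := hD (fun p => x (.inl p)) fun p => hx _
  choose g hg hEg using fun i =>
    hblock ⟨⟨_, fun k _ => hΔ (i, k) _⟩, _, fun k _ => hΔ (i, k) _⟩
      (fun l => x (.inr (i, l))) (fun l => hx _) (hEx i)
  refine ⟨Sum.elim g₀ fun q => g q.1 q.2, ⟨?_, ?_, ?_⟩, ?_⟩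
  · rintro (p | ⟨i, l⟩)
    exacts [hg₀.nonneg p, (hg i).nonneg l]
  · rintro (p | ⟨i, l⟩)
    exacts [hg₀.le p, (hg i).le l]
  · rintro (p | ⟨i, l⟩)
    exacts [hg₀.sub_le p, (hg i).sub_le l]
  · rw [eq_twoStage hE, twoStage_mulVec_eq_zero_iff]
    exact hEg

/-! ### Reduction to nonnegative vectors -/

section Signs

variable {R C : Type*} {x : C → ℝ}

/-- The entrywise sign of a real vector, as an integer vector. If the columns of a matrix are
multiplied by it, a vector `x` of the kernel turns into the nonnegative vector `|x|`. -/
noncomputable def signVec (x : C → ℝ) (c : C) : ℤ := SignType.sign (x c)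

lemma abs_signVec_le_one (x : C → ℝ) (c : C) : |signVec x c| ≤ 1 := by
  rw [signVec]
  cases SignType.sign (x c) <;> simp

lemma signVec_mul_abs (x : C → ℝ) (c : C) : (signVec x c : ℝ) * |x c| = x c := by
  rw [signVec, SignType.intCast_cast, sign_mul_abs]

lemma signVec_mul_self (x : C → ℝ) (c : C) : (signVec x c : ℝ) * x c = |x c| := by
  rw [signVec, SignType.intCast_cast, sign_mul_self]

lemma abs_signVec_mul_le {a : ℝ} (ha : 0 ≤ a) (c : C) : |signVec x c * a| ≤ a := by
  rw [abs_mul, abs_of_nonneg ha]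
  exact mul_le_of_le_one_left ha (by exact_mod_cast abs_signVec_le_one x c)

lemma conformalTo_signVec_mul {a : C → ℝ} (ha : 0 ≤ a) (hax : a ≤ |x|) :
    ConformalTo (fun c => signVec x c * a c) x := fun c => by
  refine ⟨(abs_signVec_mul_le (ha c) c).trans (hax c), ?_⟩
  rw [mul_right_comm, signVec_mul_self]
  exact mul_nonneg (abs_nonneg _) (ha c)

variable [Fintype C] [DecidableEq C] {E : Matrix R C ℤ}

lemma map_mul_diagonal_signVec_mulVec_abs (E : Matrix R C ℤ) (x : C → ℝ) :
    (E * diagonal (signVec x)).map (Int.cast : ℤ → ℝ) *ᵥ |x| = E.map Int.cast *ᵥ x := by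
  ext r
  simp [mulVec, dotProduct, mul_assoc, signVec_mul_abs]

lemma abs_mul_diagonal_signVec_le [Fintype R] (E : Matrix R C ℤ) (x : C → ℝ) (r : R) (c : C) :
    |(E * diagonal (signVec x)) r c| ≤ matNormInf E := by
  have hEΔ : (E r c).natAbs ≤ matNormInf E :=
    Finset.le_sup (f := fun p : R × C => (E p.1 p.2).natAbs) (Finset.mem_univ (r, c))
  rw [mul_diagonal, abs_mul]
  calc |E r c| * |signVec x c| ≤ |E r c| :=
        mul_le_of_le_one_right (abs_nonneg _) (abs_signVec_le_one x c)
    _ ≤ matNormInf E := by rw [Int.abs_eq_natAbs]; exact_mod_cast hEΔ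

lemma exists_oneFatDecomp_of_rounding {I : Finset C} (hx : MixedKer E I x) {D : ℝ} {g : C → ℤ}
    (hg : IsIntRounding D |x| g) (hEg : (E * diagonal (signVec x)) *ᵥ g = 0) :
    ∃ h g', OneFatDecomp E I x h g' ∧ ∀ c, |h c| ≤ D := by
  let g' : C → ℝ := fun c => signVec x c * g c
  have hg' : g' = Int.cast ∘ (diagonal (signVec x) *ᵥ g) := by ext; simp [g', mulVec_diagonal]
  have hEg' : E.map Int.cast *ᵥ g' = 0 := by
    rw [hg', ← intCast_comp_mulVec, mulVec_mulVec, hEg]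
    exact funext fun _ => Int.cast_zero
  have hfat : x - g' = fun c => signVec x c * (|x c| - g c) := by
    ext c
    simp [g', mul_sub, signVec_mul_abs]
  have hfat_nonneg (c) : 0 ≤ |x c| - g c := sub_nonneg.2 (hg.le c)
  have hg_nonneg (c) : (0 : ℝ) ≤ g c := Int.cast_nonneg (hg.nonneg c)
  refine ⟨x - g', g', ⟨(sub_add_cancel x g').symm, ?_, conformalTo_signVec_mul hg_nonneg hg.le,
    ⟨by rw [mulVec_sub, hx.1, hEg', sub_zero], fun i hi => ?_⟩, hEg', fun c => ⟨_, congrFun hg' c⟩⟩,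
    fun c => ?_⟩
  · rw [hfat]
    exact conformalTo_signVec_mul hfat_nonneg fun c => sub_le_self _ (hg_nonneg c)
  · obtain ⟨z, hz⟩ := hx.2 i hi
    exact ⟨z - signVec x i * g i, by simp [g', hz]⟩
  · rw [hfat]
    exact (abs_signVec_mul_le (hfat_nonneg c) c).trans (hg.sub_le c)

end Signs

/-- every mixed-kernel element of a 2-stage stochastic matrix admits a
one-fat decomposition whose fat element has `∞`-norm bounded by a function of the
block dimensions `r, s, t` and `‖E‖∞` alone, independently of the number of blocks. -/
theorem twoStage_oneFat_bound :
    ∃ h' : ℕ → ℕ → ℕ → ℕ → ℕ,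
      ∀ (n r s t : ℕ) (E : Matrix (Fin n × Fin t) (Fin r ⊕ Fin n × Fin s) ℤ),
        (∀ (i : Fin n) (k : Fin t) (j : Fin n) (l : Fin s),
          j ≠ i → E (i, k) (Sum.inr (j, l)) = 0) →
        ∀ (I : Finset (Fin r ⊕ Fin n × Fin s)) (x : Fin r ⊕ Fin n × Fin s → ℝ),
          MixedKer E I x →
          ∃ h g : Fin r ⊕ Fin n × Fin s → ℝ, OneFatDecomp E I x h g ∧
            ∀ c, |h c| ≤ (h' r s t (matNormInf E) : ℝ) := by
  choose D hD using fun r s t Δ : ℕ =>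
    exists_rounding_of_abs_entries_le (Fin t) (Fin r) (Fin s) Δ
  refine ⟨fun r s t Δ => ⌈D r s t Δ⌉₊, fun n r s t E hE I x hx => ?_⟩
  obtain ⟨g, hg, hEg⟩ := hD r s t (matNormInf E) (E * diagonal (signVec x))
    (fun i k j l hji => by rw [mul_diagonal, hE i k j l hji, zero_mul])
    (abs_mul_diagonal_signVec_le E x) |x| (abs_nonneg x)
    ((map_mul_diagonal_signVec_mulVec_abs E x).trans hx.1)
  obtain ⟨h, g', hdecomp, hbound⟩ := exists_oneFatDecomp_of_rounding hx hg hEg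
  exact ⟨h, g', hdecomp, fun c => (hbound c).trans (Nat.le_ceil _)⟩
end

section
/- There exists a function h' : ℕ⁴ → ℕ such that the following holds. Consider a mixed-integer program whose constraint matrix E is a 2-stage stochastic matrix with n blocks and block dimensions r, s, t, with finite bounds l ≤ u, any set I of integral coordinates, and separable convex objective f. If z* is an integral optimum of the program, then there exists a mixed optimum x* with ‖z* − x*‖∞ ≤ h'(r, s, t, ‖E‖∞). -/
/-!
Let `x` be the mixed optimum closest to `z` in the `ℓ₁`-norm and `d = x - z`, a real kernel vector
of `E`. If some nonzero integral kernel vector `g` is conformal to `d`, then `z + g` and `x - g` are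
feasible, and separable convexity gives `f (z + g) + f (x - g) ≤ f z + f x`; as `z` is an integral
optimum, `x - g` is a mixed optimum closer to `z`, a contradiction. So it suffices that a real
kernel vector with a large entry always dominates such a `g`, with a threshold that depends only on
`r, s, t, ‖E‖∞`.

The real kernel of an integer matrix is generated, by nonnegative combinations without cancellation,
by finitely many integral kernel vectors. As there are finitely many possible blocks `(A i, B i)`,
one finite set `S` of generators serves all of them, and each restriction `(d₀, dᵢ)` of `d` is a
conformal combination of `S` with coefficients `λᵢ`.

Suppose `d₀` is large. Let `Jᵢ` be the set of generators with `λᵢ ≥ M`. Then `d₀` is within a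
bounded distance of each cone spanned by the global parts of `Jᵢ`, and only boundedly many sets
`Jᵢ` occur. The system expressing this is an integer linear system of bounded size, and the
generators of its kernel yield a nonzero integral point `v` in all these cones at once, with natural
coefficients that are bounded independently of the distance; `M` is that bound. Hence the
coefficients of `v` over `Jᵢ` are at most `λᵢ`, and they lift `v` to an integral kernel vector
conformal to `d`. If `d₀` is bounded but some `dᵢ` is large, a generator with zero global part has
coefficient at least one in block `i`, and it serves as `g`.
-/

open Matrix BigOperators

/-! ### Conformal vectors -/

theorem conformalTo_iff_mem_uIcc {ι : Type*} {x y : ι → ℝ} :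
    ConformalTo x y ↔ ∀ i, x i ∈ Set.uIcc 0 (y i) := by
  refine forall_congr' fun i => ?_
  rw [Set.mem_uIcc]
  constructor
  · rintro ⟨habs, hmul⟩
    rcases le_total 0 (y i) with hy | hy
    · rw [abs_of_nonneg hy, abs_le] at habs
      exact .inl ⟨by by_contra! hx; nlinarith, habs.2⟩
    · rw [abs_of_nonpos hy, abs_le, neg_neg] at habs
      exact .inr ⟨habs.1, by by_contra! hx; nlinarith⟩
  · rintro (⟨hx, hxy⟩ | ⟨hyx, hx⟩)
    · exact ⟨abs_le_abs_of_nonneg hx hxy, mul_nonneg hx (hx.trans hxy)⟩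
    · exact ⟨abs_le_abs_of_nonpos hx hyx, mul_nonneg_of_nonpos_of_nonpos hx (hyx.trans hx)⟩

namespace ConformalTo

variable {ι : Type*} {x y z : ι → ℝ}

theorem trans (hxy : ConformalTo x y) (hyz : ConformalTo y z) : ConformalTo x z := by
  simp only [conformalTo_iff_mem_uIcc] at *
  exact fun i => Set.uIcc_subset_uIcc Set.left_mem_uIcc (hyz i) (hxy i)

theorem support_subset (h : ConformalTo x y) : Function.support x ⊆ Function.support y :=
  fun i hx hy => hx (by simpa [hy] using (h i).1)

theorem neg (h : ConformalTo x y) : ConformalTo (-x) (-y) := fun i => by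
  simpa using h i

theorem sub_left (h : ConformalTo x y) : ConformalTo (y - x) y := by
  simp only [conformalTo_iff_mem_uIcc, Set.mem_uIcc, Pi.sub_apply] at *
  grind

theorem add_of_sub (hx : ConformalTo x y) (hz : ConformalTo z (y - x)) :
    ConformalTo (z + x) y := by
  simp only [conformalTo_iff_mem_uIcc, Set.mem_uIcc, Pi.sub_apply, Pi.add_apply] at *
  grind

theorem of_one_le_smul {θ : ℝ} (hθ : 1 ≤ θ) (h : ConformalTo (θ • x) y) :
    ConformalTo x y := fun i => by
  have hθ0 : 0 < θ := by positivity
  obtain ⟨habs, hmul⟩ := h i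
  simp only [Pi.smul_apply, smul_eq_mul, abs_mul, abs_of_pos hθ0, mul_assoc] at habs hmul
  exact ⟨(le_mul_of_one_le_left (abs_nonneg _) hθ).trans habs, nonneg_of_mul_nonneg_right hmul hθ0⟩

theorem smul_of_le {a b : ℝ} (ha : 0 ≤ a) (hab : a ≤ b) (x : ι → ℝ) :
    ConformalTo (a • x) (b • x) := fun i => by
  simp only [Pi.smul_apply, smul_eq_mul, abs_mul, abs_of_nonneg ha, abs_of_nonneg (ha.trans hab)]
  refine ⟨by gcongr, ?_⟩
  rw [mul_mul_mul_comm]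
  exact mul_nonneg (mul_nonneg ha (ha.trans hab)) (mul_self_nonneg (x i))

theorem sum {κ : Type*} {s : Finset κ} {x z : κ → ι → ℝ} (hxz : ∀ k ∈ s, ConformalTo (x k) (z k))
    (hz : ∀ k ∈ s, ConformalTo (z k) (∑ j ∈ s, z j)) :
    ConformalTo (∑ k ∈ s, x k) (∑ k ∈ s, z k) := by
  simp only [conformalTo_iff_mem_uIcc, Set.mem_uIcc, Finset.sum_apply] at *
  intro i
  rcases le_total 0 (∑ k ∈ s, z k i) with hi | hi
  · have hx : ∀ k ∈ s, 0 ≤ x k i ∧ x k i ≤ z k i := by grind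
    exact .inl ⟨Finset.sum_nonneg fun k hk => (hx k hk).1,
      Finset.sum_le_sum fun k hk => (hx k hk).2⟩
  · have hx : ∀ k ∈ s, z k i ≤ x k i ∧ x k i ≤ 0 := by grind
    exact .inr ⟨Finset.sum_le_sum fun k hk => (hx k hk).1,
      Finset.sum_nonpos fun k hk => (hx k hk).2⟩

theorem vnorm1_sub [Fintype ι] (h : ConformalTo x y) : vnorm1 (y - x) = vnorm1 y - vnorm1 x := by
  rw [vnorm1, vnorm1, vnorm1, ← Finset.sum_sub_distrib]
  refine Finset.sum_congr rfl fun i _ => ?_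
  have := conformalTo_iff_mem_uIcc.mp h i
  rw [Set.mem_uIcc] at this
  rw [Pi.sub_apply]
  grind

end ConformalTo

theorem vnorm1_pos {ι : Type*} [Fintype ι] {x : ι → ℝ} (hx : x ≠ 0) : 0 < vnorm1 x := by
  obtain ⟨i, hi⟩ := Function.ne_iff.mp hx
  exact Finset.sum_pos' (fun _ _ => abs_nonneg _) ⟨i, Finset.mem_univ i, abs_pos.mpr hi⟩

/-! ### Sign patterns of real kernels -/

/-- `φ` rounds `T * v` on a `ℤ`-basis of `V`, so the error does not grow with `T`; for large `T` it
is too small to change a sign. -/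
theorem exists_intLinearMap_approx (V : Submodule ℤ ℝ) [Module.Finite ℤ V] :
    ∃ δ : V → ℝ, ∀ T : ℝ, ∃ φ : V →ₗ[ℤ] ℤ, ∀ v, |(φ v : ℝ) - T * v| ≤ δ v := by
  let b := Module.Free.chooseBasis ℤ V
  refine ⟨fun v => ∑ j, |(b.repr v j : ℝ)|, fun T => ⟨b.constr ℤ fun j => ⌊T * b j⌋, fun v => ?_⟩⟩
  have hv : (v : ℝ) = ∑ j, (b.repr v j : ℝ) * b j := by
    have hrepr := congrArg V.subtype (b.sum_repr v)
    rw [map_sum] at hrepr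
    simpa [-Module.Basis.sum_repr] using hrepr.symm
  have hdiff : ((b.constr ℤ fun j => ⌊T * b j⌋) v : ℝ) - T * v =
      ∑ j, -(b.repr v j * Int.fract (T * b j)) := by
    rw [hv, Module.Basis.constr_apply_fintype, Finset.mul_sum, Int.cast_sum,
      ← Finset.sum_sub_distrib]
    refine Finset.sum_congr rfl fun j _ => ?_
    rw [Int.fract, Module.Basis.equivFun_apply, smul_eq_mul, Int.cast_mul]
    ring
  rw [hdiff]
  refine (Finset.abs_sum_le_sum_abs _ _).trans (Finset.sum_le_sum fun j _ => ?_)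
  rw [abs_neg, abs_mul, Int.abs_fract]
  exact mul_le_of_le_one_right (abs_nonneg _) (Int.fract_lt_one _).le

theorem exists_intLinearMap_sign_eq {V : Submodule ℤ ℝ} [Module.Finite ℤ V] {C : Type*} [Finite C]
    (y : C → V) :
    ∃ φ : V →ₗ[ℤ] ℤ, ∀ c, SignType.sign (φ (y c)) = SignType.sign (y c : ℝ) := by
  obtain ⟨δ, hδ⟩ := exists_intLinearMap_approx V
  have hlarge : ∀ᶠ T : ℝ in Filter.atTop, ∀ c, y c ≠ 0 → δ (y c) < T * |(y c : ℝ)| := by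
    refine Filter.eventually_all.mpr fun c => ?_
    by_cases hc : y c = 0
    · simp [hc]
    · have habs : 0 < |(y c : ℝ)| := abs_pos.mpr (by simpa using hc)
      filter_upwards [(Filter.tendsto_id.atTop_mul_const habs).eventually_gt_atTop (δ (y c))]
        with T hT _ using hT
  obtain ⟨T, hT⟩ := hlarge.exists
  obtain ⟨φ, hφ⟩ := hδ T
  refine ⟨φ, fun c => ?_⟩
  by_cases hc : y c = 0
  · simp [hc]
  have happrox := abs_lt.mp ((hφ (y c)).trans_lt (hT c hc))
  rcases lt_or_gt_of_ne (show (y c : ℝ) ≠ 0 by simpa using hc) with hneg | hpos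
  · rw [abs_of_neg hneg] at happrox
    have : (φ (y c) : ℝ) < 0 := by linarith
    rw [sign_neg hneg, sign_neg (by exact_mod_cast this)]
  · rw [abs_of_pos hpos] at happrox
    have : 0 < (φ (y c) : ℝ) := by linarith
    rw [sign_pos hpos, sign_pos (by exact_mod_cast this)]

section Kernel

variable {R C : Type*} [Fintype C]

theorem map_intCast_mulVec_eq_zero {A : Matrix R C ℤ} {g : C → ℤ} (hg : A *ᵥ g = 0) :
    A.map (Int.cast : ℤ → ℝ) *ᵥ (fun c => (g c : ℝ)) = 0 := funext fun k =>
  ((Int.castRingHom ℝ).map_mulVec A g k).symm.trans (by simp [hg])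

theorem exists_int_mulVec_eq_zero_sign_eq (A : Matrix R C ℤ) {y : C → ℝ}
    (hy : A.map (Int.cast : ℤ → ℝ) *ᵥ y = 0) :
    ∃ g : C → ℤ, A *ᵥ g = 0 ∧ ∀ c, SignType.sign (g c) = SignType.sign (y c) := by
  let V := Submodule.span ℤ (Set.range y)
  have : Module.Finite ℤ V := Module.Finite.span_of_finite ℤ (Set.finite_range y)
  let w : C → V := fun c => ⟨y c, Submodule.subset_span ⟨c, rfl⟩⟩
  obtain ⟨φ, hφ⟩ := exists_intLinearMap_sign_eq w
  refine ⟨φ ∘ w, funext fun k => ?_, hφ⟩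
  have hrow : ∑ c, A k c • w c = 0 := by
    ext
    simpa [w, Matrix.mulVec, dotProduct] using congrFun hy k
  simpa [Matrix.mulVec, dotProduct] using congrArg φ hrow

theorem exists_finset_sign_representatives {𝒜 : Set (Matrix R C ℤ)} (h𝒜 : 𝒜.Finite) :
    ∃ S : Finset (C → ℤ), ∀ A ∈ 𝒜, ∀ y : C → ℝ, A.map (Int.cast : ℤ → ℝ) *ᵥ y = 0 →
      ∃ g ∈ S, A *ᵥ g = 0 ∧ ∀ c, SignType.sign (g c) = SignType.sign (y c) := by
  classical
  let P : Set (Matrix R C ℤ × (C → SignType)) :=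
    {p | p.1 ∈ 𝒜 ∧ ∃ g : C → ℤ, p.1 *ᵥ g = 0 ∧ ∀ c, SignType.sign (g c) = p.2 c}
  have hP : P.Finite := (h𝒜.prod Set.finite_univ).subset fun p hp => ⟨hp.1, Set.mem_univ _⟩
  choose! G hG using fun p (hp : p ∈ P) => hp.2
  refine ⟨hP.toFinset.image G, fun A hA y hy => ?_⟩
  have hp : (A, fun c => SignType.sign (y c)) ∈ P := ⟨hA, exists_int_mulVec_eq_zero_sign_eq A hy⟩
  exact ⟨G _, Finset.mem_image_of_mem G (hP.mem_toFinset.mpr hp), hG _ hp⟩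

end Kernel
/-! ### Conformal decompositions -/

/-- `y` is the combination `lam ᵥ* a` of the rows of the integer matrix `a` with nonnegative
coefficients, using only rows in the kernel of `A` and without cancellation in any coordinate. -/
structure IsConformalDecomp {R C κ : Type*} [Fintype C] [Fintype κ] (A : Matrix R C ℤ)
    (a : Matrix κ C ℤ) (lam : κ → ℝ) (y : C → ℝ) : Prop where
  nonneg : 0 ≤ lam
  mulVec_eq_zero : ∀ k, lam k ≠ 0 → A *ᵥ a k = 0
  conformalTo : ∀ k, ConformalTo (lam k • fun c => (a k c : ℝ)) y
  eq_vecMul : y = lam ᵥ* a.map (Int.cast : ℤ → ℝ)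

section Decomp

variable {R C κ : Type*}

theorem exists_pos_smul_conformalTo [Finite C] {y g : C → ℝ} (hy : y ≠ 0)
    (hg : ∀ c, SignType.sign (g c) = SignType.sign (y c)) :
    ∃ θ : ℝ, 0 < θ ∧ ConformalTo (θ • g) y ∧ ∃ c, y c ≠ 0 ∧ (y - θ • g) c = 0 := by
  have hratio : ∀ c, y c ≠ 0 → 0 < y c / g c := by
    intro c hc
    rcases lt_or_gt_of_ne hc with h | h
    · exact div_pos_of_neg_of_neg h (sign_eq_neg_one_iff.mp ((hg c).trans (sign_neg h)))
    · exact div_pos h (sign_eq_one_iff.mp ((hg c).trans (sign_pos h)))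
  have hzero : ∀ c, y c = 0 → g c = 0 := fun c hc =>
    sign_eq_zero_iff.mp ((hg c).trans (sign_eq_zero_iff.mpr hc))
  have hmul : ∀ c, y c ≠ 0 → y c = y c / g c * g c := fun c hc =>
    (div_mul_cancel₀ _ fun h => by simpa [h] using hratio c hc).symm
  obtain ⟨c₀, hc₀, hmin⟩ := Set.exists_min_image _ (fun c => y c / g c)
    (Function.support y).toFinite (Function.support_nonempty_iff.mpr hy)
  refine ⟨y c₀ / g c₀, hratio c₀ hc₀, fun c => ?_, c₀, hc₀, sub_eq_zero.mpr (hmul c₀ hc₀)⟩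
  by_cases hc : y c = 0
  · simp [hc, hzero c hc]
  · rw [hmul c hc]
    exact ConformalTo.smul_of_le (hratio c₀ hc₀).le (hmin c hc) g c

theorem exists_isConformalDecomp_of_sign [Fintype C] [Fintype κ] {A : Matrix R C ℤ}
    {a : Matrix κ C ℤ}
    (ha : ∀ y : C → ℝ, A.map (Int.cast : ℤ → ℝ) *ᵥ y = 0 →
      ∃ k, A *ᵥ a k = 0 ∧ ∀ c, SignType.sign (a k c) = SignType.sign (y c))
    (y : C → ℝ) (hy : A.map (Int.cast : ℤ → ℝ) *ᵥ y = 0) :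
    ∃ lam, IsConformalDecomp A a lam y := by
  classical
  induction hn : (Function.support y).ncard using Nat.strong_induction_on generalizing y with
  | _ n ih =>
  subst hn
  by_cases hy0 : y = 0
  · subst hy0
    exact ⟨0, le_rfl, fun k hk => absurd rfl hk, fun k c => by simp, by simp⟩
  obtain ⟨k, hk, hsign⟩ := ha y hy
  obtain ⟨θ, hθ, hconf, c₀, hc₀, hc₀'⟩ :=
    exists_pos_smul_conformalTo (g := fun c => (a k c : ℝ)) hy0 (by simpa using hsign)
  set y' := y - θ • fun c => (a k c : ℝ)
  have hy' : ConformalTo y' y := hconf.sub_left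
  have hsupp : Function.support y' ⊂ Function.support y :=
    hy'.support_subset.ssubset_of_mem_notMem hc₀ (by simpa using hc₀')
  have hker : A.map (Int.cast : ℤ → ℝ) *ᵥ y' = 0 := by
    rw [mulVec_sub, mulVec_smul, hy, map_intCast_mulVec_eq_zero hk, smul_zero, sub_zero]
  obtain ⟨lam, hlam⟩ := ih _ (Set.ncard_lt_ncard hsupp) y' hker rfl
  refine ⟨lam + Pi.single k θ, ?_, fun j hj => ?_, fun j => ?_, ?_⟩
  · exact add_nonneg hlam.nonneg (Pi.single_nonneg.mpr hθ.le)
  · rcases eq_or_ne j k with rfl | hjk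
    · exact hk
    · exact hlam.mulVec_eq_zero j (by simpa [hjk] using hj)
  · rcases eq_or_ne j k with rfl | hjk
    · rw [Pi.add_apply, Pi.single_eq_same, add_smul]
      exact hconf.add_of_sub (hlam.conformalTo j)
    · simpa [hjk] using (hlam.conformalTo j).trans hy'
  · rw [add_vecMul, ← hlam.eq_vecMul, single_vecMul]
    exact (sub_add_cancel _ _).symm

theorem exists_finset_isConformalDecomp [Fintype C] {𝒜 : Set (Matrix R C ℤ)} (h𝒜 : 𝒜.Finite) :
    ∃ S : Finset (C → ℤ), ∀ A ∈ 𝒜, ∀ y : C → ℝ, A.map (Int.cast : ℤ → ℝ) *ᵥ y = 0 →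
      ∃ lam, IsConformalDecomp A (Matrix.of fun g : S => (g : C → ℤ)) lam y := by
  obtain ⟨S, hS⟩ := exists_finset_sign_representatives h𝒜
  refine ⟨S, fun A hA => exists_isConformalDecomp_of_sign fun y hy => ?_⟩
  obtain ⟨g, hgS, hg⟩ := hS A hA y hy
  exact ⟨⟨g, hgS⟩, hg⟩

namespace IsConformalDecomp

variable [Fintype C] [Fintype κ] {A : Matrix R C ℤ} {a : Matrix κ C ℤ} {lam : κ → ℝ} {y : C → ℝ}

theorem conformalTo_row (h : IsConformalDecomp A a lam y) {k : κ} (hk : 1 ≤ lam k) :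
    ConformalTo (fun c => (a k c : ℝ)) y :=
  (h.conformalTo k).of_one_le_smul hk

theorem entry_eq_zero (h : IsConformalDecomp A a lam y) {k : κ} {c : C} (hc : |y c| < lam k) :
    a k c = 0 := by
  by_contra hne
  have hle := (h.conformalTo k c).1
  have hone : (1 : ℝ) ≤ |(a k c : ℝ)| := by exact_mod_cast Int.one_le_abs hne
  rw [Pi.smul_apply, smul_eq_mul, abs_mul, abs_of_nonneg (h.nonneg k)] at hle
  exact hc.not_ge ((le_mul_of_one_le_right (h.nonneg k) hone).trans hle)

theorem mulVec_vecMul_eq_zero (h : IsConformalDecomp A a lam y) {nu : κ → ℤ} (hnu : ∀ k, 0 ≤ nu k)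
    (hle : ∀ k, (nu k : ℝ) ≤ lam k) : A *ᵥ (nu ᵥ* a) = 0 := by
  rw [vecMul_eq_sum, mulVec_sum]
  refine Finset.sum_eq_zero fun k _ => ?_
  by_cases hk : lam k = 0
  · have hnu0 : nu k = 0 := le_antisymm (by exact_mod_cast hk ▸ hle k) (hnu k)
    rw [hnu0, zero_smul, mulVec_zero]
  · rw [mulVec_smul, h.mulVec_eq_zero k hk, smul_zero]

theorem conformalTo_vecMul (h : IsConformalDecomp A a lam y) {nu : κ → ℤ} (hnu : ∀ k, 0 ≤ nu k)
    (hle : ∀ k, (nu k : ℝ) ≤ lam k) : ConformalTo (fun c => ((nu ᵥ* a) c : ℝ)) y := by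
  have hy := h.eq_vecMul
  rw [vecMul_eq_sum] at hy
  have hconf := ConformalTo.sum (s := Finset.univ) (fun k _ =>
      ConformalTo.smul_of_le (Int.cast_nonneg (hnu k)) (hle k) (a.map (Int.cast : ℤ → ℝ) k))
    (fun k _ => hy ▸ h.conformalTo k)
  rw [← hy] at hconf
  convert hconf using 1
  ext c
  simp [Matrix.vecMul, dotProduct]

end IsConformalDecomp

theorem abs_le_matNormInf [Fintype R] [Fintype C] (E : Matrix R C ℤ) (k : R) (c : C) :
    |E k c| ≤ matNormInf E := by
  rw [Int.abs_eq_natAbs]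
  exact_mod_cast Finset.le_sup (f := fun p : R × C => (E p.1 p.2).natAbs) (Finset.mem_univ (k, c))

theorem finite_setOf_matNormInf_le [Fintype R] [Fintype C] (Δ : ℕ) :
    {A : Matrix R C ℤ | matNormInf A ≤ Δ}.Finite := by
  classical
  refine (Set.finite_Icc (α := R → C → ℤ) (fun _ _ => -Δ) (fun _ _ => Δ)).subset fun A hA => ?_
  have hentry : ∀ k c, |A k c| ≤ Δ := fun k c =>
    (abs_le_matNormInf A k c).trans (by exact_mod_cast hA)
  exact ⟨fun k c => (abs_le.mp (hentry k c)).1, fun k c => (abs_le.mp (hentry k c)).2⟩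

theorem exists_lt_coeff_of_lt_abs_vecMul [Fintype C] [Fintype κ] {a : Matrix κ C ℤ} {mu : κ → ℝ}
    (hmu : 0 ≤ mu) {T : ℝ} (hT : 0 ≤ T) {c : C}
    (hc : Fintype.card κ * (T * matNormInf a) < |(mu ᵥ* a.map (Int.cast : ℤ → ℝ)) c|) :
    ∃ k, a k c ≠ 0 ∧ T < mu k := by
  contrapose! hc
  refine (Finset.abs_sum_le_sum_abs _ _).trans ?_
  rw [← nsmul_eq_mul]
  refine Finset.sum_le_card_nsmul _ _ _ fun k _ => ?_
  change |mu k * (a k c : ℝ)| ≤ _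
  rw [abs_mul, abs_of_nonneg (hmu k)]
  by_cases hk : a k c = 0
  · rw [hk, Int.cast_zero, abs_zero, mul_zero]
    positivity
  · have hentry : |(a k c : ℝ)| ≤ matNormInf a := by exact_mod_cast abs_le_matNormInf a k c
    gcongr
    exact hc k hk

end Decomp

/-! ### A common integral point of several cones -/

section CommonPoint

variable {P κ ρ : Type*} [Fintype κ]

/-- The integer matrix of the equations `d = lam J ᵥ* a + e J` for `J : P`, in the unknowns
`d : ρ`, `lam : P × κ` and `e : P × ρ`. -/
def couplingMatrix [DecidableEq P] [DecidableEq ρ] (a : Matrix κ ρ ℤ) :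
    Matrix (P × ρ) (ρ ⊕ (P × κ) ⊕ (P × ρ)) ℤ :=
  Matrix.of fun p => Sum.elim (Pi.single p.2 1)
    (Sum.elim (fun q => if q.1 = p.1 then -a q.2 p.2 else 0) (-Pi.single p 1))

theorem couplingMatrix_map_mulVec_apply [Fintype P] [Fintype ρ] [DecidableEq P] [DecidableEq ρ]
    {𝕜 : Type*} [CommRing 𝕜] (a : Matrix κ ρ ℤ) (y : ρ ⊕ (P × κ) ⊕ (P × ρ) → 𝕜) (J : P) (c : ρ) :
    ((couplingMatrix a).map (Int.cast : ℤ → 𝕜) *ᵥ y) (J, c) =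
      y (.inl c) - ((fun k => y (.inr (.inl (J, k)))) ᵥ* a.map (Int.cast : ℤ → 𝕜)) c
        - y (.inr (.inr (J, c))) := by
  have hlam : ∑ q : P × κ, ((if q.1 = J then -a q.2 c else 0 : ℤ) : 𝕜) * y (.inr (.inl q)) =
      -∑ k, y (.inr (.inl (J, k))) * (a k c : 𝕜) := by
    rw [Fintype.sum_prod_type, Finset.sum_eq_single J (fun J' _ hJ' => by simp [hJ']) (by simp)]
    simp [mul_comm]
  have herr : ∑ q : P × ρ, ((-Pi.single (J, c) 1 : P × ρ → ℤ) q : 𝕜) * y (.inr (.inr q)) =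
      -y (.inr (.inr (J, c))) := by
    simp [Pi.single_apply]
  have hd : ∑ c' : ρ, ((Pi.single c 1 : ρ → ℤ) c' : 𝕜) * y (.inl c') = y (.inl c) := by
    simp [Pi.single_apply]
  simp only [Matrix.mulVec, dotProduct, map_apply, couplingMatrix, of_apply, Fintype.sum_sum_type,
    Sum.elim_inl, Sum.elim_inr, hlam, herr, hd, Matrix.vecMul]
  ring

/-- `M` does not depend on the distance `K`, since it bounds the entries of the generators of the
kernel of the coupling matrix. A generator with coefficient above `K` vanishes in every error
coordinate that is at most `K`, so it satisfies the corresponding equations exactly. -/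
theorem exists_common_integral_vecMul [Finite P] [Finite ρ] (a : Matrix κ ρ ℤ) :
    ∃ M : ℕ, ∀ K : ℝ, ∃ H : ℝ, ∀ (d : ρ → ℝ) (lam : P → κ → ℝ), 0 ≤ lam → (∃ c, H < |d c|) →
      ∃ v : ρ → ℤ, v ≠ 0 ∧ ConformalTo (fun c => (v c : ℝ)) d ∧ ∃ nu : P → κ → ℤ,
        (∀ J k, 0 ≤ nu J k ∧ nu J k ≤ M ∧ (nu J k : ℝ) ≤ lam J k) ∧
        ∀ J, (∀ c, |d c - (lam J ᵥ* a.map (Int.cast : ℤ → ℝ)) c| ≤ K) → v = nu J ᵥ* a := by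
  classical
  have := Fintype.ofFinite P
  have := Fintype.ofFinite ρ
  obtain ⟨S, hS⟩ := exists_finset_isConformalDecomp
    (Set.finite_singleton (couplingMatrix (P := P) a))
  let gen : Matrix S (ρ ⊕ (P × κ) ⊕ (P × ρ)) ℤ := Matrix.of fun g => g
  refine ⟨matNormInf gen, fun K => ⟨Fintype.card S * (max 1 K * matNormInf gen), ?_⟩⟩
  rintro d lam hlam ⟨c₀, hc₀⟩
  let err : P × ρ → ℝ := fun p => d p.2 - (lam p.1 ᵥ* a.map (Int.cast : ℤ → ℝ)) p.2
  let y : ρ ⊕ (P × κ) ⊕ (P × ρ) → ℝ := Sum.elim d (Sum.elim (fun p => lam p.1 p.2) err)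
  have hy : (couplingMatrix a).map (Int.cast : ℤ → ℝ) *ᵥ y = 0 := by
    ext ⟨J, c⟩
    simp [couplingMatrix_map_mulVec_apply, y, err]
  obtain ⟨mu, hmu : IsConformalDecomp _ gen mu y⟩ := hS _ rfl y hy
  obtain ⟨g, hgc₀, hg⟩ := exists_lt_coeff_of_lt_abs_vecMul hmu.nonneg
    (zero_le_one.trans (le_max_left 1 K))
    (c := Sum.inl c₀) (by rwa [← hmu.eq_vecMul])
  have hmu1 : 1 < mu g := (le_max_left 1 K).trans_lt hg
  have hconf := hmu.conformalTo_row hmu1.le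
  have hker := hmu.mulVec_eq_zero g (by positivity)
  refine ⟨fun c => gen g (.inl c), fun h => hgc₀ (congrFun h c₀), fun c => hconf (.inl c),
    fun J k => gen g (.inr (.inl (J, k))), fun J k => ?_, fun J hJ => funext fun c => ?_⟩
  · have hlamJ : 0 ≤ lam J k := hlam J k
    have hbound := conformalTo_iff_mem_uIcc.mp hconf (.inr (.inl (J, k)))
    rw [show y (.inr (.inl (J, k))) = lam J k from rfl, Set.uIcc_of_le hlamJ] at hbound
    exact ⟨by exact_mod_cast hbound.1, (le_abs_self _).trans (abs_le_matNormInf gen g _),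
      hbound.2⟩
  · have herr : gen g (.inr (.inr (J, c))) = 0 :=
      hmu.entry_eq_zero ((hJ c).trans_lt ((le_max_right 1 K).trans_lt hg))
    have hcast : (Int.cast : ℤ → ℤ) = fun n => n := funext fun _ => Int.cast_id
    have hrow := couplingMatrix_map_mulVec_apply a (gen g) J c
    rw [herr, hcast, Matrix.map_id', Matrix.map_id', hker, Pi.zero_apply, sub_zero] at hrow
    exact sub_eq_zero.mp hrow.symm

theorem abs_vecMul_sub_vecMul_indicator_le [Fintype ρ] (a : Matrix κ ρ ℤ) {mu : κ → ℝ}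
    (hmu : 0 ≤ mu) {T : ℝ} (hT : 0 ≤ T) (c : ρ) :
    |(mu ᵥ* a.map (Int.cast : ℤ → ℝ)) c -
        ({k | T ≤ mu k}.indicator mu ᵥ* a.map (Int.cast : ℤ → ℝ)) c| ≤
      Fintype.card κ * (T * matNormInf a) := by
  rw [← Pi.sub_apply, ← sub_vecMul, ← Set.indicator_compl]
  by_contra! hlt
  obtain ⟨k, -, hk⟩ := exists_lt_coeff_of_lt_abs_vecMul
    (fun k => Set.indicator_nonneg (fun k _ => hmu k) k) hT hlt
  rw [Set.indicator_apply] at hk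
  split_ifs at hk with hkT
  · exact hkT hk.le
  · exact hk.not_ge hT

/-- There are only `2 ^ card κ` possible sets of rows with large coefficients, so boundedly many
cones occur, however large `ι` is. -/
theorem exists_common_integral_vecMul_le [Finite ρ] (a : Matrix κ ρ ℤ) :
    ∃ H : ℝ, ∀ {ι : Type*} (d : ρ → ℝ) (lam : ι → κ → ℝ), (∀ i, 0 ≤ lam i) →
      (∀ i, d = lam i ᵥ* a.map (Int.cast : ℤ → ℝ)) → (∃ c, H < |d c|) →
      ∃ v : ρ → ℤ, v ≠ 0 ∧ ConformalTo (fun c => (v c : ℝ)) d ∧ ∃ nu : ι → κ → ℤ,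
        ∀ i, v = nu i ᵥ* a ∧ ∀ k, 0 ≤ nu i k ∧ (nu i k : ℝ) ≤ lam i k := by
  have := Fintype.ofFinite ρ
  obtain ⟨M, hM⟩ := exists_common_integral_vecMul (P := Set κ) a
  obtain ⟨H, hH⟩ := hM (Fintype.card κ * (M * matNormInf a))
  refine ⟨H, fun {ι} d lam hlam hd hc => ?_⟩
  let large : ι → Set κ := fun i => {k | (M : ℝ) ≤ lam i k}
  have htruncate : ∀ Q : Set κ, ∃ mu : κ → ℝ, 0 ≤ mu ∧ (∀ k ∉ Q, mu k = 0) ∧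
      ∀ i, large i = Q → ∀ c, |d c - (mu ᵥ* a.map (Int.cast : ℤ → ℝ)) c| ≤
        Fintype.card κ * (M * matNormInf a) := fun Q => by
    by_cases hQ : ∃ i, large i = Q
    · obtain ⟨i, rfl⟩ := hQ
      refine ⟨(large i).indicator (lam i), fun k => Set.indicator_nonneg (fun k _ => hlam i k) k,
        fun k hk => Set.indicator_of_notMem hk _, fun _ _ c => ?_⟩
      nth_rw 1 [hd i]
      exact abs_vecMul_sub_vecMul_indicator_le a (hlam i) M.cast_nonneg c
    · exact ⟨0, le_rfl, fun _ _ => rfl, fun i hi => absurd ⟨i, hi⟩ hQ⟩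
  choose mu hmu hmu_notMem hmu_approx using htruncate
  obtain ⟨v, hv, hvd, nu, hnu, hv_eq⟩ := hH d mu hmu hc
  refine ⟨v, hv, hvd, fun i => nu (large i), fun i => ⟨hv_eq _ (hmu_approx _ i rfl), fun k => ?_⟩⟩
  obtain ⟨hnonneg, hleM, hle⟩ := hnu (large i) k
  refine ⟨hnonneg, ?_⟩
  by_cases hk : k ∈ large i
  · exact le_trans (by exact_mod_cast hleM) hk
  · exact hle.trans ((hmu_notMem _ k hk).trans_le (hlam i k))

end CommonPoint

/-! ### Two-stage matrices -/

section TwoStage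

variable {ι ρ σ τ : Type*}

/-- Two-stage stochastic matrices: the rows of block `i` vanish on the local columns of all other
blocks. The global columns are indexed by `ρ`, the local columns of each block by `σ`. -/
def IsTwoStage {𝕜 : Type*} [Zero 𝕜] (E : Matrix (ι × τ) (ρ ⊕ ι × σ) 𝕜) : Prop :=
  ∀ i k j l, j ≠ i → E (i, k) (.inr (j, l)) = 0

/-- The inclusion of the columns of block `i`, global and local, into all columns. -/
def blockColumn (i : ι) : ρ ⊕ σ → ρ ⊕ ι × σ := Sum.map id (Prod.mk i)

/-- The block `(A i, B i)` of a two-stage matrix, with its global columns `A i` and its local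
columns `B i`. -/
def twoStageBlock {𝕜 : Type*} (E : Matrix (ι × τ) (ρ ⊕ ι × σ) 𝕜) (i : ι) : Matrix τ (ρ ⊕ σ) 𝕜 :=
  E.submatrix (Prod.mk i) (blockColumn i)

theorem IsTwoStage.mulVec_eq_zero_iff [Fintype ι] [Fintype ρ] [Fintype σ] {𝕜 : Type*}
    [NonUnitalNonAssocSemiring 𝕜] {E : Matrix (ι × τ) (ρ ⊕ ι × σ) 𝕜} (hE : IsTwoStage E)
    {y : ρ ⊕ ι × σ → 𝕜} :
    E *ᵥ y = 0 ↔ ∀ i, twoStageBlock E i *ᵥ (y ∘ blockColumn i) = 0 := by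
  have happly : ∀ i k, (E *ᵥ y) (i, k) = (twoStageBlock E i *ᵥ (y ∘ blockColumn i)) k := by
    intro i k
    simp only [Matrix.mulVec, dotProduct, Fintype.sum_sum_type, Fintype.sum_prod_type,
      twoStageBlock, submatrix_apply, blockColumn, Sum.map_inl, Sum.map_inr, id_eq,
      Function.comp_apply]
    congr 1
    refine Finset.sum_eq_single i (fun j _ hj => ?_) (by simp)
    exact Finset.sum_eq_zero fun l _ => by rw [hE i k j l hj, zero_mul]
  simp only [funext_iff, Prod.forall, happly, Pi.zero_apply]

theorem IsTwoStage.map_intCast {E : Matrix (ι × τ) (ρ ⊕ ι × σ) ℤ} (hE : IsTwoStage E) :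
    IsTwoStage (E.map (Int.cast : ℤ → ℝ)) := fun i k j l hj => by
  rw [map_apply, hE i k j l hj, Int.cast_zero]

theorem matNormInf_twoStageBlock_le [Fintype ι] [Fintype ρ] [Fintype σ] [Fintype τ]
    (E : Matrix (ι × τ) (ρ ⊕ ι × σ) ℤ) (i : ι) : matNormInf (twoStageBlock E i) ≤ matNormInf E :=
  Finset.sup_le fun p _ => Finset.le_sup (f := fun q : (ι × τ) × (ρ ⊕ ι × σ) => (E q.1 q.2).natAbs)
    (Finset.mem_univ ((i, p.1), blockColumn i p.2))

end TwoStage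

/-! ### Integral kernel vectors below large real ones -/

/-- Every real kernel vector of `E` with an entry larger than `H` in absolute value dominates, in
the conformal order, a nonzero integral kernel vector. -/
def HasIntegralThreshold {R C : Type*} [Fintype C] (E : Matrix R C ℤ) (H : ℝ) : Prop :=
  ∀ y : C → ℝ, E.map (Int.cast : ℤ → ℝ) *ᵥ y = 0 → (∃ c, H < |y c|) →
    ∃ g : C → ℤ, g ≠ 0 ∧ E *ᵥ g = 0 ∧ ConformalTo (fun c => (g c : ℝ)) y

section Threshold

variable {ι ρ σ τ κ : Type*} [Fintype ρ] [Fintype σ] [Fintype κ]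
  {a : Matrix κ (ρ ⊕ σ) ℤ}

theorem exists_integral_conformalTo_of_lt_abs_global (a : Matrix κ (ρ ⊕ σ) ℤ) :
    ∃ H : ℝ, ∀ {ι : Type*} [Fintype ι] {E : Matrix (ι × τ) (ρ ⊕ ι × σ) ℤ} {y : ρ ⊕ ι × σ → ℝ}
      {lam : ι → κ → ℝ}, IsTwoStage E →
      (∀ i, IsConformalDecomp (twoStageBlock E i) a (lam i) (y ∘ blockColumn i)) →
      (∃ c, H < |y (.inl c)|) →
      ∃ g : ρ ⊕ ι × σ → ℤ, g ≠ 0 ∧ E *ᵥ g = 0 ∧ ConformalTo (fun c => (g c : ℝ)) y := by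
  obtain ⟨H, hH⟩ := exists_common_integral_vecMul_le a.toCols₁
  refine ⟨H, fun {ι} _ E y lam hE hlam hc => ?_⟩
  obtain ⟨v, hv, hvy, nu, hnu⟩ := hH (fun c => y (.inl c)) lam (fun i => (hlam i).nonneg)
    (fun i => funext fun c => congrFun (hlam i).eq_vecMul (.inl c)) hc
  have hker := fun i => (hlam i).mulVec_vecMul_eq_zero
    (fun k => ((hnu i).2 k).1) (fun k => ((hnu i).2 k).2)
  have hconf := fun i => (hlam i).conformalTo_vecMul
    (fun k => ((hnu i).2 k).1) (fun k => ((hnu i).2 k).2)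
  let g : ρ ⊕ ι × σ → ℤ := Sum.elim v fun p => (nu p.1 ᵥ* a) (.inr p.2)
  have hblock : ∀ i, g ∘ blockColumn i = nu i ᵥ* a := fun i => by
    ext (c | l)
    · exact congrFun (hnu i).1 c
    · rfl
  refine ⟨g, fun hg => hv (funext fun c => congrFun hg (.inl c)), ?_, ?_⟩
  · exact hE.mulVec_eq_zero_iff.mpr fun i => hblock i ▸ hker i
  · rintro (c | ⟨i, l⟩)
    · exact hvy c
    · exact hconf i (.inr l)

theorem exists_integral_conformalTo_of_lt_abs_local [Fintype ι] {E : Matrix (ι × τ) (ρ ⊕ ι × σ) ℤ}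
    {y : ρ ⊕ ι × σ → ℝ} {lam : κ → ℝ} {T : ℝ} {i : ι} {l : σ} (hE : IsTwoStage E)
    (hlam : IsConformalDecomp (twoStageBlock E i) a lam (y ∘ blockColumn i))
    (hT : ∀ c, |y (.inl c)| ≤ T)
    (hl : Fintype.card κ * (max 1 T * matNormInf a) < |y (.inr (i, l))|) :
    ∃ g : ρ ⊕ ι × σ → ℤ, g ≠ 0 ∧ E *ᵥ g = 0 ∧ ConformalTo (fun c => (g c : ℝ)) y := by
  classical
  obtain ⟨k, hkl, hk⟩ := exists_lt_coeff_of_lt_abs_vecMul hlam.nonneg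
    (zero_le_one.trans (le_max_left 1 T)) (c := Sum.inr l) (by rwa [← hlam.eq_vecMul])
  have hk1 : 1 < lam k := (le_max_left 1 T).trans_lt hk
  have hglobal : ∀ c, a k (.inl c) = 0 := fun c =>
    hlam.entry_eq_zero (((hT c).trans (le_max_right 1 T)).trans_lt hk)
  let g : ρ ⊕ ι × σ → ℤ := Sum.elim 0 fun p => if p.1 = i then a k (.inr p.2) else 0
  have hblock : ∀ j, g ∘ blockColumn j = if j = i then a k else 0 := fun j => by
    ext (c | l')
    · by_cases hj : j = i <;> simp [g, blockColumn, hj, hglobal]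
    · by_cases hj : j = i <;> simp [g, blockColumn, hj]
  refine ⟨g, fun hg => hkl ?_, hE.mulVec_eq_zero_iff.mpr fun j => ?_, ?_⟩
  · simpa [g] using congrFun hg (.inr (i, l))
  · rw [hblock]
    split_ifs with hj
    · exact hj ▸ hlam.mulVec_eq_zero k (by positivity)
    · exact mulVec_zero _
  · rintro (c | ⟨j, l'⟩)
    · simp [g]
    · by_cases hj : j = i
      · subst hj
        simpa [g, blockColumn] using hlam.conformalTo_row hk1.le (.inr l')
      · simp [g, hj]

theorem exists_hasIntegralThreshold_of_isTwoStage [Fintype τ] (Δ : ℕ) :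
    ∃ H : ℕ, ∀ {ι : Type*} [Fintype ι] {E : Matrix (ι × τ) (ρ ⊕ ι × σ) ℤ}, IsTwoStage E →
      matNormInf E ≤ Δ → HasIntegralThreshold E H := by
  obtain ⟨S, hS⟩ := exists_finset_isConformalDecomp
    (finite_setOf_matNormInf_le (R := τ) (C := ρ ⊕ σ) Δ)
  let gen : Matrix S (ρ ⊕ σ) ℤ := Matrix.of fun g => g
  obtain ⟨T, hT⟩ := exists_integral_conformalTo_of_lt_abs_global (τ := τ) gen
  let L : ℝ := Fintype.card S * (max 1 T * matNormInf gen)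
  refine ⟨⌈max T L⌉₊, fun {ι} _ E hE hΔ y hy ⟨c, hc⟩ => ?_⟩
  have hceil : max T L < |y c| := (Nat.le_ceil _).trans_lt hc
  have hdecomp : ∀ i, ∃ lam, IsConformalDecomp (twoStageBlock E i) gen lam (y ∘ blockColumn i) :=
    fun i => hS _ ((matNormInf_twoStageBlock_le E i).trans hΔ) _
      (hE.map_intCast.mulVec_eq_zero_iff.mp hy i)
  choose lam hlam using hdecomp
  by_cases hglobal : ∃ c, T < |y (.inl c)|
  · exact hT hE hlam hglobal
  · push Not at hglobal
    rcases c with c | ⟨i, l⟩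
    · exact absurd (hglobal c) ((le_max_left T L).trans_lt hceil).not_ge
    · exact exists_integral_conformalTo_of_lt_abs_local hE (hlam i) hglobal
        ((le_max_right T L).trans_lt hceil)

end Threshold

/-! ### Exchange between two optima -/

/-- The feasible points of the mixed-integer program with constraints `E *ᵥ y = b` and
`l ≤ y ≤ u` in which the coordinates in `I` are integral. -/
def feasibleSet {R C : Type*} [Fintype C] (E : Matrix R C ℤ) (b : R → ℝ) (l u : C → ℝ)
    (I : Set C) : Set (C → ℝ) :=
  {y | E.map (Int.cast : ℤ → ℝ) *ᵥ y = b ∧ l ≤ y ∧ y ≤ u ∧ ∀ c ∈ I, ∃ w : ℤ, y c = w}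

theorem exists_isMinOn_forall_isMinOn_le {X : Type*} [TopologicalSpace X] {K : Set X}
    (hK : IsCompact K) (hne : K.Nonempty) {F G : X → ℝ} (hF : Continuous F) (hG : Continuous G) :
    ∃ x ∈ K, IsMinOn F K x ∧ ∀ y ∈ K, IsMinOn F K y → G x ≤ G y := by
  obtain ⟨x₀, hx₀, hmin⟩ := hK.exists_isMinOn hne hF.continuousOn
  have hopt : IsCompact (K ∩ {x | F x ≤ F x₀}) := hK.inter_right (isClosed_le hF continuous_const)
  obtain ⟨x, ⟨hx, hxle⟩, hxmin⟩ := hopt.exists_isMinOn ⟨x₀, hx₀, le_refl (F x₀)⟩ hG.continuousOn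
  exact ⟨x, hx, isMinOn_iff.mpr fun y hy => le_trans hxle (hmin hy),
    fun y hy hymin => hxmin ⟨hy, hymin hx₀⟩⟩

theorem map_add_add_map_sub_le_of_mem_uIcc {φ : ℝ → ℝ} (hφ : ConvexOn ℝ Set.univ φ) {a b g : ℝ}
    (hg : g ∈ Set.uIcc 0 (b - a)) : φ (a + g) + φ (b - g) ≤ φ a + φ b := by
  rw [← segment_eq_uIcc] at hg
  obtain ⟨s, t, hs, ht, hst, rfl⟩ := hg
  obtain rfl : s = 1 - t := by linarith
  have hleft := hφ.2 (Set.mem_univ a) (Set.mem_univ b) hs ht hst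
  have hright := hφ.2 (Set.mem_univ a) (Set.mem_univ b) ht hs (by ring)
  simp only [smul_eq_mul] at *
  rw [show a + ((1 - t) * 0 + t * (b - a)) = (1 - t) * a + t * b by ring,
    show b - ((1 - t) * 0 + t * (b - a)) = t * a + (1 - t) * b by ring]
  linarith

section Exchange

variable {R C : Type*} [Fintype C] {E : Matrix R C ℤ} {b : R → ℝ} {l u : C → ℝ} {I J : Set C}

theorem isCompact_feasibleSet : IsCompact (feasibleSet E b l u I) := by
  have hset : feasibleSet E b l u I = Set.Icc l u ∩ ({y | E.map (Int.cast : ℤ → ℝ) *ᵥ y = b} ∩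
      ⋂ c ∈ I, (fun y => y c) ⁻¹' Set.range (Int.cast : ℤ → ℝ)) := by
    ext y
    simp only [feasibleSet, Set.mem_ofPred_eq, Set.mem_inter_iff, Set.mem_Icc, Set.mem_iInter,
      Set.mem_preimage, Set.mem_range, eq_comm]
    tauto
  rw [hset]
  exact isCompact_Icc.inter_right ((isClosed_eq (by fun_prop) continuous_const).inter
    (isClosed_biInter fun c _ =>
      Int.isClosedEmbedding_coe_real.isClosed_range.preimage (continuous_apply c)))

theorem add_mem_feasibleSet {z x g : C → ℝ} (hz : z ∈ feasibleSet E b l u J)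
    (hlx : l ≤ x) (hxu : x ≤ u) (hg : E.map (Int.cast : ℤ → ℝ) *ᵥ g = 0)
    (hgJ : ∀ c ∈ J, ∃ w : ℤ, g c = w) (hgx : ConformalTo g (x - z)) :
    z + g ∈ feasibleSet E b l u J := by
  obtain ⟨hzE, hlz, hzu, hzJ⟩ := hz
  have hmem := conformalTo_iff_mem_uIcc.mp hgx
  simp only [Set.mem_uIcc, Pi.sub_apply] at hmem
  refine ⟨?_, fun c => ?_, fun c => ?_, fun c hc => ?_⟩
  · rw [mulVec_add, hzE, hg, add_zero]
  · rw [Pi.add_apply]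
    grind [hlz c, hlx c, hmem c]
  · rw [Pi.add_apply]
    grind [hzu c, hxu c, hmem c]
  · obtain ⟨w, hw⟩ := hzJ c hc
    obtain ⟨w', hw'⟩ := hgJ c hc
    exact ⟨w + w', by rw [Pi.add_apply, hw, hw', Int.cast_add]⟩

/-- The sets `I` and `J` may differ because the vector moved from `x` to `z` is integral in every
coordinate. -/
theorem HasIntegralThreshold.exists_isMinOn_abs_sub_le {H : ℝ} (hE : HasIntegralThreshold E H)
    {f : C → ℝ → ℝ} (hf : ∀ c, ConvexOn ℝ Set.univ (f c)) (hne : (feasibleSet E b l u I).Nonempty)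
    {z : C → ℝ} (hz : z ∈ feasibleSet E b l u J)
    (hzmin : IsMinOn (fun y => ∑ c, f c (y c)) (feasibleSet E b l u J) z) :
    ∃ x ∈ feasibleSet E b l u I, IsMinOn (fun y => ∑ c, f c (y c)) (feasibleSet E b l u I) x ∧
      ∀ c, |z c - x c| ≤ H := by
  have hfcont : ∀ c, Continuous (f c) := fun c =>
    continuousOn_univ.mp ((hf c).continuousOn isOpen_univ)
  obtain ⟨x, hx, hxmin, hxclosest⟩ := exists_isMinOn_forall_isMinOn_le
    isCompact_feasibleSet hne (F := fun y => ∑ c, f c (y c)) (G := fun y => vnorm1 (y - z))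
    (by fun_prop) (by unfold vnorm1; fun_prop)
  refine ⟨x, hx, hxmin, ?_⟩
  by_contra! hfar
  obtain ⟨c, hc⟩ := hfar
  obtain ⟨g, hg0, hgE, hgx⟩ := hE (x - z) (by rw [mulVec_sub, hx.1, hz.1, sub_self])
    ⟨c, by rwa [Pi.sub_apply, abs_sub_comm]⟩
  set gr : C → ℝ := fun c => g c
  have hgrE : E.map (Int.cast : ℤ → ℝ) *ᵥ gr = 0 := map_intCast_mulVec_eq_zero hgE
  have hzg : z + gr ∈ feasibleSet E b l u J :=
    add_mem_feasibleSet hz hx.2.1 hx.2.2.1 hgrE (fun c _ => ⟨g c, rfl⟩) hgx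
  have hxg : x - gr ∈ feasibleSet E b l u I := by
    rw [sub_eq_add_neg]
    exact add_mem_feasibleSet hx hz.2.1 hz.2.2.1 (by rw [mulVec_neg, hgrE, neg_zero])
      (fun c _ => ⟨-g c, by simp [gr]⟩) (by simpa only [neg_sub] using hgx.neg)
  have hexchange : ∑ c, f c ((z + gr) c) + ∑ c, f c ((x - gr) c) ≤
      ∑ c, f c (z c) + ∑ c, f c (x c) := by
    simp only [← Finset.sum_add_distrib]
    exact Finset.sum_le_sum fun c _ =>
      map_add_add_map_sub_le_of_mem_uIcc (hf c) (conformalTo_iff_mem_uIcc.mp hgx c)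
  have hxgmin : IsMinOn (fun y => ∑ c, f c (y c)) (feasibleSet E b l u I) (x - gr) := fun y hy => by
    have := isMinOn_iff.mp hzmin _ hzg
    have := isMinOn_iff.mp hxmin y hy
    rw [Set.mem_ofPred_eq]
    linarith
  have hcloser := hxclosest _ hxg hxgmin
  rw [sub_right_comm, hgx.vnorm1_sub] at hcloser
  have : 0 < vnorm1 gr := vnorm1_pos fun h => hg0 (funext fun c => by simpa [gr] using congrFun h c)
  linarith

end Exchange

theorem twoStage_mip_proximity_general {ρ σ τ : Type*} [Fintype ρ] [Fintype σ] [Fintype τ]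
    (Δ : ℕ) :
    ∃ H : ℕ, ∀ {ι : Type*} [Fintype ι] {E : Matrix (ι × τ) (ρ ⊕ ι × σ) ℤ}, IsTwoStage E →
      matNormInf E ≤ Δ →
      ∀ {I J : Set (ρ ⊕ ι × σ)} {b : ι × τ → ℝ} {l u : ρ ⊕ ι × σ → ℝ} {f : ρ ⊕ ι × σ → ℝ → ℝ},
      (∀ c, ConvexOn ℝ Set.univ (f c)) → (feasibleSet E b l u I).Nonempty →
      ∀ z ∈ feasibleSet E b l u J,
        IsMinOn (fun y => ∑ c, f c (y c)) (feasibleSet E b l u J) z →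
        ∃ x ∈ feasibleSet E b l u I,
          IsMinOn (fun y => ∑ c, f c (y c)) (feasibleSet E b l u I) x ∧ ∀ c, |z c - x c| ≤ H := by
  obtain ⟨H, hH⟩ := exists_hasIntegralThreshold_of_isTwoStage (ρ := ρ) (σ := σ) (τ := τ) Δ
  exact ⟨H, fun hE hΔ _ _ _ _ _ _ hf hne _ hz hmin =>
    (hH hE hΔ).exists_isMinOn_abs_sub_le hf hne hz hmin⟩

/-- proximity for 2-stage stochastic MIPs: for any integral optimum `z`
there is a mixed optimum `x` with `‖z − x‖∞` bounded by a function of the block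
dimensions and `‖E‖∞` alone. -/
theorem twoStage_mip_proximity :
    ∃ h' : ℕ → ℕ → ℕ → ℕ → ℕ,
      ∀ (n r s t : ℕ) (E : Matrix (Fin n × Fin t) (Fin r ⊕ Fin n × Fin s) ℤ),
        (∀ (i : Fin n) (k : Fin t) (j : Fin n) (l : Fin s),
          j ≠ i → E (i, k) (Sum.inr (j, l)) = 0) →
        ∀ (I : Finset (Fin r ⊕ Fin n × Fin s)) (b : Fin n × Fin t → ℝ)
          (l u : (Fin r ⊕ Fin n × Fin s) → ℝ), l ≤ u →
        ∀ f : (Fin r ⊕ Fin n × Fin s) → ℝ → ℝ, (∀ c, ConvexOn ℝ Set.univ (f c)) →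
        ∀ Feas : ((Fin r ⊕ Fin n × Fin s) → ℝ) → Prop,
          (Feas = fun y => (E.map (Int.cast : ℤ → ℝ)).mulVec y = b ∧
            l ≤ y ∧ y ≤ u ∧ ∀ c ∈ I, ∃ w : ℤ, y c = w) →
        ∀ z : (Fin r ⊕ Fin n × Fin s) → ℤ,
          (Feas fun c => (z c : ℝ)) →
          (∀ y : (Fin r ⊕ Fin n × Fin s) → ℤ, (Feas fun c => (y c : ℝ)) →
            ∑ c, f c (z c) ≤ ∑ c, f c (y c)) →
          ∃ x : (Fin r ⊕ Fin n × Fin s) → ℝ, Feas x ∧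
            (∀ y, Feas y → ∑ c, f c (x c) ≤ ∑ c, f c (y c)) ∧
            ∀ c, |(z c : ℝ) - x c| ≤ (h' r s t (matNormInf E) : ℝ) := by
  choose h hh using fun r s t Δ =>
    twoStage_mip_proximity_general (ρ := Fin r) (σ := Fin s) (τ := Fin t) Δ
  refine ⟨h, ?_⟩
  rintro n r s t E hE I b l u - f hf _ rfl z hz hmin
  have hz_univ : (fun c => (z c : ℝ)) ∈ feasibleSet E b l u Set.univ :=
    ⟨hz.1, hz.2.1, hz.2.2.1, fun c _ => ⟨z c, rfl⟩⟩
  have hmin_univ : IsMinOn (fun y => ∑ c, f c (y c)) (feasibleSet E b l u Set.univ)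
      (fun c => (z c : ℝ)) := isMinOn_iff.mpr fun y hy => by
    choose w hw using fun c => hy.2.2.2 c trivial
    obtain rfl : y = fun c => (w c : ℝ) := funext hw
    exact hmin w ⟨hy.1, hy.2.1, hy.2.2.1, fun c _ => ⟨w c, rfl⟩⟩
  obtain ⟨x, hx, hxmin, hzx⟩ :=
    hh r s t (matNormInf E) hE le_rfl (I := I) hf ⟨_, hz⟩ _ hz_univ hmin_univ
  exact ⟨x, hx, isMinOn_iff.mp hxmin, hzx⟩
end

section
/- For every integer n ≥ 2 there exist finite sets S and T of positive integers with |S| = |T| = n such that (1) Σ_{s∈S} s = Σ_{t∈T} t = 2^{n²} − 1, and (2) for every pair of subsets S' ⊆ S and T' ⊆ T with 0 < |S' ∪ T'| < 2n, it holds that Σ_{s∈S'} s ≠ Σ_{t∈T'} t. -/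
open BigOperators

/-!
Put the weights `2 ^ k`, `k < m * n`, into the cells of an `m × n` grid, and let `S` and `T` consist
of the row sums and of the column sums. Both add up to the total weight. Subset sums of the weights
are distinct, so a sum of rows determines the set of cells it covers, and likewise for columns. A
set of cells that is both a union of rows and a union of columns is empty or the whole grid; in the
latter case all `m + n` elements of `S ∪ T` occur, since no row is a column once the grid has at
least two cells.
-/

open Finset

/-- A family of weights has distinct subset sums when its sums over different finite sets of
indices are different. -/
def DistinctSubsetSums {α M : Type*} [AddCommMonoid M] (w : α → M) : Prop :=
  Function.Injective fun s : Finset α ↦ ∑ x ∈ s, w x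

namespace DistinctSubsetSums

variable {α β M : Type*} [AddCommMonoid M] {w : α → M}

lemma injective (hw : DistinctSubsetSums w) : Function.Injective w := fun x y hxy ↦
  singleton_injective (hw (by simpa only [sum_singleton] using hxy))

lemma ne_zero (hw : DistinctSubsetSums w) (x : α) : w x ≠ 0 := fun hx ↦
  singleton_ne_empty x (hw (by simpa only [sum_singleton, sum_empty] using hx))

lemma comp (hw : DistinctSubsetSums w) {f : β → α} (hf : Function.Injective f) :
    DistinctSubsetSums (w ∘ f) := fun s t hst ↦
  map_injective ⟨f, hf⟩ (hw (by simpa using hst))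

end DistinctSubsetSums

lemma distinctSubsetSums_pow {b : ℕ} (hb : 2 ≤ b) : DistinctSubsetSums fun k : ℕ ↦ b ^ k :=
  geomSum_injective hb

section Grid

variable {ι κ M : Type*} [AddCommMonoid M]

/-- The sum of row `i` of a grid of weights. -/
def rowSum [Fintype κ] (w : ι × κ → M) (i : ι) : M := ∑ j, w (i, j)

/-- The sum of column `j` of a grid of weights. -/
def colSum [Fintype ι] (w : ι × κ → M) (j : κ) : M := ∑ i, w (i, j)

lemma sum_rowSum [Fintype κ] (w : ι × κ → M) (R : Finset ι) :
    ∑ i ∈ R, rowSum w i = ∑ x ∈ R ×ˢ univ, w x :=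
  (sum_product ..).symm

lemma sum_colSum [Fintype ι] (w : ι × κ → M) (C : Finset κ) :
    ∑ j ∈ C, colSum w j = ∑ x ∈ univ ×ˢ C, w x :=
  (sum_product_right ..).symm

lemma product_univ_eq_univ_product_iff [Fintype ι] [Fintype κ] [Nonempty ι] [Nonempty κ]
    {R : Finset ι} {C : Finset κ} :
    R ×ˢ univ = univ ×ˢ C ↔ (R = ∅ ∧ C = ∅) ∨ (R = univ ∧ C = univ) := by
  rw [← coe_inj, coe_product, coe_product, Set.prod_eq_prod_iff]
  simp [or_comm, eq_comm (a := Set.univ) (b := (C : Set κ))]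

namespace DistinctSubsetSums

variable {w : ι × κ → M}

protected lemma rowSum [Fintype κ] [Nonempty κ] (hw : DistinctSubsetSums w) :
    DistinctSubsetSums (rowSum w) := by
  intro R R' h
  have hprod : R ×ˢ univ = R' ×ˢ univ := hw (by simpa only [sum_rowSum] using h)
  rwa [← coe_inj, coe_product, coe_product, Set.prod_eq_iff_eq (by simp), coe_inj] at hprod

protected lemma colSum [Fintype ι] [Nonempty ι] (hw : DistinctSubsetSums w) :
    DistinctSubsetSums (colSum w) :=
  (hw.comp Prod.swap_injective).rowSum

variable [Fintype ι] [Fintype κ]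

lemma eq_empty_or_eq_univ_of_sum_rowSum_eq_sum_colSum [Nonempty ι] [Nonempty κ]
    (hw : DistinctSubsetSums w) {R : Finset ι} {C : Finset κ}
    (h : ∑ i ∈ R, rowSum w i = ∑ j ∈ C, colSum w j) :
    (R = ∅ ∧ C = ∅) ∨ (R = univ ∧ C = univ) :=
  product_univ_eq_univ_product_iff.1 (hw (by simpa only [sum_rowSum, sum_colSum] using h))

lemma rowSum_ne_colSum [Nontrivial (ι × κ)] (hw : DistinctSubsetSums w) (i : ι) (j : κ) :
    rowSum w i ≠ colSum w j := by
  have : Nonempty ι := ⟨i⟩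
  have : Nonempty κ := ⟨j⟩
  intro h
  rcases hw.eq_empty_or_eq_univ_of_sum_rowSum_eq_sum_colSum (R := {i}) (C := {j})
    (by simpa only [sum_singleton] using h) with ⟨hi, -⟩ | ⟨hi, hj⟩
  · exact singleton_ne_empty i hi
  · have hcells : ({(i, j)} : Finset (ι × κ)) = univ := by
      rw [← singleton_product_singleton, hi, hj, univ_product_univ]
    obtain ⟨x, hx⟩ := exists_ne (i, j)
    exact hx (mem_singleton.1 (hcells ▸ mem_univ x))

variable [DecidableEq M]

lemma card_image_rowSum_union_image_colSum [Nontrivial (ι × κ)] (hw : DistinctSubsetSums w) :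
    (univ.image (rowSum w) ∪ univ.image (colSum w)).card = Fintype.card ι + Fintype.card κ := by
  obtain ⟨_, _⟩ := nonempty_prod.1 (Nontrivial.to_nonempty (α := ι × κ))
  have hdisj : Disjoint (univ.image (rowSum w)) (univ.image (colSum w)) := by
    simp only [disjoint_left, mem_image, mem_univ, true_and]
    rintro _ ⟨i, rfl⟩ ⟨j, hj⟩
    exact hw.rowSum_ne_colSum i j hj.symm
  rw [card_union_of_disjoint hdisj, card_image_of_injective _ hw.rowSum.injective,
    card_image_of_injective _ hw.colSum.injective, card_univ, card_univ]

theorem sum_ne_sum_of_card_union_lt [Nontrivial (ι × κ)] (hw : DistinctSubsetSums w)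
    {S' T' : Finset M} (hS : S' ⊆ univ.image (rowSum w)) (hT : T' ⊆ univ.image (colSum w))
    (hpos : 0 < (S' ∪ T').card) (hlt : (S' ∪ T').card < Fintype.card ι + Fintype.card κ) :
    ∑ s ∈ S', s ≠ ∑ t ∈ T', t := by
  obtain ⟨_, _⟩ := nonempty_prod.1 (Nontrivial.to_nonempty (α := ι × κ))
  intro heq
  obtain ⟨R, -, rfl⟩ := subset_image_iff.1 hS
  obtain ⟨C, -, rfl⟩ := subset_image_iff.1 hT
  rw [sum_image hw.rowSum.injective.injOn, sum_image hw.colSum.injective.injOn] at heq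
  rcases hw.eq_empty_or_eq_univ_of_sum_rowSum_eq_sum_colSum heq with ⟨rfl, rfl⟩ | ⟨rfl, rfl⟩
  · simp at hpos
  · exact hlt.ne hw.card_image_rowSum_union_image_colSum

end DistinctSubsetSums

end Grid

/-- The `m × n` grid with the weights `2 ^ k`, `k < m * n`, in row-major order. -/
def powTwoGrid (m n : ℕ) (x : Fin m × Fin n) : ℕ := 2 ^ (finProdFinEquiv x : ℕ)

lemma distinctSubsetSums_powTwoGrid (m n : ℕ) : DistinctSubsetSums (powTwoGrid m n) :=
  (distinctSubsetSums_pow le_rfl).comp (Fin.val_injective.comp finProdFinEquiv.injective)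

lemma sum_powTwoGrid (m n : ℕ) : ∑ x, powTwoGrid m n x = 2 ^ (m * n) - 1 := by
  calc ∑ x, powTwoGrid m n x
      = ∑ k : Fin (m * n), 2 ^ (k : ℕ) := finProdFinEquiv.sum_comp fun k ↦ 2 ^ (k : ℕ)
    _ = ∑ k ∈ range (m * n), 2 ^ k := Fin.sum_univ_eq_sum_range (2 ^ ·) _
    _ = 2 ^ (m * n) - 1 := by rw [Nat.geomSum_eq le_rfl, Nat.div_one]

theorem distinct_subset_sums_sets_general (m n : ℕ) (hmn : 1 < m * n) :
    ∃ S T : Finset ℕ,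
      (∀ s ∈ S, 0 < s) ∧ (∀ t ∈ T, 0 < t) ∧
      S.card = m ∧ T.card = n ∧
      (∑ s ∈ S, s) = 2 ^ (m * n) - 1 ∧ (∑ t ∈ T, t) = 2 ^ (m * n) - 1 ∧
      ∀ S' ⊆ S, ∀ T' ⊆ T, 0 < (S' ∪ T').card → (S' ∪ T').card < m + n →
        (∑ s ∈ S', s) ≠ (∑ t ∈ T', t) := by
  have : NeZero m := ⟨by rintro rfl; simp at hmn⟩
  have : NeZero n := ⟨by rintro rfl; simp at hmn⟩
  have : Nontrivial (Fin m × Fin n) := Fintype.one_lt_card_iff_nontrivial.1 (by simpa using hmn)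
  have hw := distinctSubsetSums_powTwoGrid m n
  refine ⟨univ.image (rowSum (powTwoGrid m n)), univ.image (colSum (powTwoGrid m n)),
    ?_, ?_, ?_, ?_, ?_, ?_, ?_⟩
  · simpa using fun i ↦ Nat.pos_of_ne_zero (hw.rowSum.ne_zero i)
  · simpa using fun j ↦ Nat.pos_of_ne_zero (hw.colSum.ne_zero j)
  · rw [card_image_of_injective _ hw.rowSum.injective, card_fin]
  · rw [card_image_of_injective _ hw.colSum.injective, card_fin]
  · rw [sum_image hw.rowSum.injective.injOn, sum_rowSum, univ_product_univ, sum_powTwoGrid]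
  · rw [sum_image hw.colSum.injective.injOn, sum_colSum, univ_product_univ, sum_powTwoGrid]
  · intro S' hS T' hT hpos hlt
    exact hw.sum_ne_sum_of_card_union_lt hS hT hpos (by simpa using hlt)

/-- for every `n ≥ 2` there are sets `S, T` of `n` positive integers each,
both summing to `2^(n²) − 1`, such that no nonempty proper "partial" pair of subsets
`S' ⊆ S`, `T' ⊆ T` with `0 < |S' ∪ T'| < 2n` has equal sums. -/
theorem distinct_subset_sums_sets (n : ℕ) (hn : 2 ≤ n) :
    ∃ S T : Finset ℕ,
      (∀ s ∈ S, 0 < s) ∧ (∀ t ∈ T, 0 < t) ∧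
      S.card = n ∧ T.card = n ∧
      (∑ s ∈ S, s) = 2 ^ (n ^ 2) - 1 ∧ (∑ t ∈ T, t) = 2 ^ (n ^ 2) - 1 ∧
      ∀ S' ⊆ S, ∀ T' ⊆ T, 0 < (S' ∪ T').card → (S' ∪ T').card < 2 * n →
        (∑ s ∈ S', s) ≠ (∑ t ∈ T', t) := by
  simpa only [sq, two_mul] using distinct_subset_sums_sets_general n n (by nlinarith)
end

section
/- For every even integer n ≥ 2, let E_n be the integer matrix whose columns are indexed by [n]×{1,2,3} and whose rows are indexed by the disjoint union of {1,2,3} and [n], with entries: the entry in global row j ∈ {1,2,3} and column (i,j') equals 1 if j' = j and 0 otherwise, and the entry in local row i ∈ [n] and column (i',j') equals 1 if i' = i and 0 otherwise (so E_n is the n-fold matrix with top blocks the 3×3 identity and diagonal blocks the row vector (1,1,1), and ‖E_n‖∞ = 1). Let the integral coordinates be I = {(i,1) : i ∈ [n]}. Then the mixed Graver basis G_X(E_n) contains an element g with ‖g‖₁ ≥ n; in particular, the maximum ℓ₁-norm of mixed Graver basis elements of E_n grows at least linearly in n even though the block dimensions and ‖E_n‖∞ are constant. -/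
/-!
A vector in the kernel of `E` is a real `n × 3` array whose rows (the bricks) and columns all sum
to zero. Take disjoint sets `P`, `N` of `m = ⌊n / 2⌋` bricks each, and `q ∈ N`. Let `g` have the
bricks `(1, -1/m, 1/m - 1)` on `P`, the brick `(-1, 1, 0)` at `q`, the bricks `(-1, 0, 1)` on the
rest of `N`, and zero elsewhere.

In each brick the integral entry is `±1` and is balanced by entries of the opposite sign, so a
zero-sum brick with integral first entry that is conformal to it is either zero or the whole brick.
Hence a mixed kernel vector conformal to `g` just selects a set `S` of bricks. The second column
gives `|S ∩ P| = m` if `q ∈ S` and `|S ∩ P| = 0` otherwise; the first gives `|S ∩ P| = |S ∩ N|`.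
So `S` contains all of `P ∪ N` or misses it, and `g` is minimal. Each of its `2m` nonzero bricks
has `ℓ₁`-norm `2`, so `‖g‖₁ = 4m ≥ n`.
-/

open Matrix BigOperators

namespace ConformalTo

variable {κ : Type*} {u v : κ → ℝ}

theorem neg_s13 (h : ConformalTo u v) : ConformalTo (-u) (-v) := fun j => by
  simpa only [Pi.neg_apply, abs_neg, neg_mul_neg] using h j

theorem nonneg_and_le (h : ConformalTo u v) {j : κ} (hj : 0 ≤ v j) : 0 ≤ u j ∧ u j ≤ v j := by
  obtain ⟨habs, hmul⟩ := h j
  rw [abs_of_nonneg hj] at habs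
  obtain ⟨hlower, hupper⟩ := abs_le.mp habs
  exact ⟨by by_contra! hneg; nlinarith, hupper⟩

theorem nonpos_and_le (h : ConformalTo u v) {j : κ} (hj : v j ≤ 0) : u j ≤ 0 ∧ v j ≤ u j := by
  have := h.neg_s13.nonneg_and_le (j := j) (by simpa using hj)
  simpa only [Pi.neg_apply, Left.nonneg_neg_iff, neg_le_neg_iff] using this

theorem eq_zero (h : ConformalTo u 0) : u = 0 :=
  funext fun j => by simpa only [Pi.zero_apply, abs_zero, abs_nonpos_iff] using (h j).1

variable [Fintype κ] {k : κ}

theorem eq_zero_or_eq_of_apply_eq_one (h : ConformalTo u v) (hu : ∑ j, u j = 0)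
    (hv : ∑ j, v j = 0) (hint : ∃ z : ℤ, u k = z) (hk : v k = 1)
    (hsign : ∀ j, j ≠ k → v j ≤ 0) : u = 0 ∨ u = v := by
  obtain ⟨z, hz⟩ := hint
  have hk_mem := h.nonneg_and_le (j := k) (by rw [hk]; exact zero_le_one)
  rw [hk, hz] at hk_mem
  have hz_mem : 0 ≤ z ∧ z ≤ 1 := by exact_mod_cast hk_mem
  obtain rfl | rfl : z = 0 ∨ z = 1 := by omega
  · left
    have hnonpos : u ≤ 0 := fun j => by
      by_cases hj : j = k
      · simp [hj, hz]
      · exact (h.nonpos_and_le (hsign j hj)).1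
    exact (Fintype.sum_eq_zero_iff_of_nonpos hnonpos).mp hu
  · right
    have hle : ∀ j ∈ Finset.univ, v j ≤ u j := fun j _ => by
      by_cases hj : j = k
      · simp [hj, hz, hk]
      · exact (h.nonpos_and_le (hsign j hj)).2
    have heq := (Finset.sum_eq_sum_iff_of_le hle).mp (hv.trans hu.symm)
    exact funext fun j => (heq j (Finset.mem_univ j)).symm

theorem eq_zero_or_eq_of_apply_eq_neg_one (h : ConformalTo u v) (hu : ∑ j, u j = 0)
    (hv : ∑ j, v j = 0) (hint : ∃ z : ℤ, u k = z) (hk : v k = -1)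
    (hsign : ∀ j, j ≠ k → 0 ≤ v j) : u = 0 ∨ u = v := by
  obtain ⟨z, hz⟩ := hint
  have hneg := h.neg_s13.eq_zero_or_eq_of_apply_eq_one (k := k) (by simp [hu]) (by simp [hv])
    ⟨-z, by simp [hz]⟩ (by simp [hk]) (fun j hj => by simpa using hsign j hj)
  simpa only [neg_eq_zero, neg_inj] using hneg

end ConformalTo

theorem two_mul_abs_le_sum_abs_of_sum_eq_zero {κ : Type*} [Fintype κ] {v : κ → ℝ}
    (hv : ∑ j, v j = 0) (k : κ) : 2 * |v k| ≤ ∑ j, |v j| := by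
  classical
  rw [← Finset.add_sum_erase _ _ (Finset.mem_univ k)] at hv ⊢
  have hrest : |v k| ≤ ∑ j ∈ Finset.univ.erase k, |v j| := by
    rw [eq_neg_of_add_eq_zero_left hv, abs_neg]
    exact Finset.abs_sum_le_sum_abs _ _
  linarith

section Transportation

/-- The `n`-fold matrix with top blocks the identity of size `κ` and diagonal blocks the all-ones
row, with bricks indexed by `ι`. It is the constraint matrix of the `ι × κ` transportation problem:
its rows compute the column sums and the row sums of an array. -/
def transportationMatrix (ι κ : Type*) [DecidableEq ι] [DecidableEq κ] :
    Matrix (κ ⊕ ι) (ι × κ) ℤ :=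
  Matrix.of fun r c =>
    match r with
    | Sum.inl j => if c.2 = j then 1 else 0
    | Sum.inr i => if c.1 = i then 1 else 0

variable {ι κ : Type*} [DecidableEq ι] [DecidableEq κ] [Fintype ι] [Fintype κ]

theorem transportationMatrix_mulVec_inl (y : ι × κ → ℝ) (j : κ) :
    ((transportationMatrix ι κ).map (Int.cast : ℤ → ℝ) *ᵥ y) (Sum.inl j) = ∑ i, y (i, j) := by
  simp [transportationMatrix, mulVec, dotProduct, Fintype.sum_prod_type]

theorem transportationMatrix_mulVec_inr (y : ι × κ → ℝ) (i : ι) :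
    ((transportationMatrix ι κ).map (Int.cast : ℤ → ℝ) *ᵥ y) (Sum.inr i) = ∑ j, y (i, j) := by
  simp [transportationMatrix, mulVec, dotProduct, Fintype.sum_prod_type_right]

theorem mixedKer_transportationMatrix_iff {k : κ} {y : ι × κ → ℝ} :
    MixedKer (transportationMatrix ι κ) (Finset.univ.filter fun c => c.2 = k) y ↔
      (∀ j, ∑ i, y (i, j) = 0) ∧ (∀ i, ∑ j, y (i, j) = 0) ∧ ∀ i, ∃ z : ℤ, y (i, k) = z := by
  simp only [MixedKer, funext_iff, Sum.forall, transportationMatrix_mulVec_inl,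
    transportationMatrix_mulVec_inr, Pi.zero_apply, Finset.mem_filter, Finset.mem_univ, true_and,
    Prod.forall, forall_eq, and_assoc]

end Transportation

section BalancedElement

variable {ι : Type*} [DecidableEq ι] {P N S : Finset ι} {q i : ι}

/-- The integral entry of brick `i` of `balancedElement P N q`. -/
def integralEntry (P N : Finset ι) (i : ι) : ℝ :=
  (if i ∈ P then 1 else 0) - (if i ∈ N then 1 else 0)

/-- The second entry of brick `i` of `balancedElement P N q`. -/
noncomputable def fractionalEntry (P : Finset ι) (q i : ι) : ℝ :=
  (if i = q then 1 else 0) - (if i ∈ P then (P.card : ℝ)⁻¹ else 0)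

/-- The long element of the mixed Graver basis, for disjoint `P` and `N` of equal size and `q ∈ N`:
with `m = |P|`, its bricks are `(1, -1/m, 1/m - 1)` on `P`, `(-1, 1, 0)` at `q`, `(-1, 0, 1)` on
the rest of `N`, and zero elsewhere. -/
noncomputable def balancedElement (P N : Finset ι) (q : ι) (c : ι × Fin 3) : ℝ :=
  ![integralEntry P N c.1, fractionalEntry P q c.1,
    -integralEntry P N c.1 - fractionalEntry P q c.1] c.2

theorem sum_integralEntry (P N S : Finset ι) :
    ∑ i ∈ S, integralEntry P N i = (S ∩ P).card - (S ∩ N).card := by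
  simp only [integralEntry, Finset.sum_sub_distrib, Finset.sum_ite_mem, Finset.sum_const,
    nsmul_eq_mul, mul_one]

theorem sum_fractionalEntry (P S : Finset ι) (q : ι) :
    ∑ i ∈ S, fractionalEntry P q i = (if q ∈ S then 1 else 0) - (S ∩ P).card / P.card := by
  simp only [fractionalEntry, Finset.sum_sub_distrib, Finset.sum_ite_mem, Finset.sum_ite_eq',
    Finset.sum_const, nsmul_eq_mul, div_eq_mul_inv]

theorem integralEntry_of_mem_left (hPN : Disjoint P N) (hi : i ∈ P) : integralEntry P N i = 1 := by
  simp [integralEntry, hi, Finset.disjoint_left.mp hPN hi]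

theorem integralEntry_of_mem_right (hPN : Disjoint P N) (hi : i ∈ N) :
    integralEntry P N i = -1 := by
  simp [integralEntry, hi, Finset.disjoint_right.mp hPN hi]

theorem exists_int_integralEntry (P N : Finset ι) (i : ι) : ∃ z : ℤ, integralEntry P N i = z :=
  ⟨(if i ∈ P then 1 else 0) - (if i ∈ N then 1 else 0), by simp [integralEntry]⟩

theorem sum_balancedElement_brick (P N : Finset ι) (q i : ι) :
    ∑ j, balancedElement P N q (i, j) = 0 := by
  simp [balancedElement, Fin.sum_univ_three]

theorem balancedElement_nonpos (hPN : Disjoint P N) (hq : q ∈ N) (hi : i ∈ P) {j : Fin 3}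
    (hj : j ≠ 0) : balancedElement P N q (i, j) ≤ 0 := by
  have hiq : i ≠ q := fun h => Finset.disjoint_left.mp hPN hi (h ▸ hq)
  have hcard : (1 : ℝ) ≤ P.card := by exact_mod_cast Finset.card_pos.mpr ⟨i, hi⟩
  have hinv : (P.card : ℝ)⁻¹ ≤ 1 := inv_le_one_of_one_le₀ hcard
  fin_cases j
  · exact absurd rfl hj
  · simp [balancedElement, fractionalEntry, hi, hiq]
  · simpa [balancedElement, fractionalEntry, integralEntry_of_mem_left hPN hi, hi, hiq] using hinv

theorem balancedElement_nonneg (hPN : Disjoint P N) (hi : i ∈ N) {j : Fin 3} (hj : j ≠ 0) :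
    0 ≤ balancedElement P N q (i, j) := by
  have hiP : i ∉ P := Finset.disjoint_right.mp hPN hi
  fin_cases j
  · exact absurd rfl hj
  · rcases eq_or_ne i q with rfl | hiq <;> simp [balancedElement, fractionalEntry, *]
  · rcases eq_or_ne i q with rfl | hiq <;>
      simp [balancedElement, fractionalEntry, integralEntry_of_mem_right hPN hi, *]

theorem balancedElement_eq_zero (hq : q ∈ N) (hi : i ∉ P ∪ N) (j : Fin 3) :
    balancedElement P N q (i, j) = 0 := by
  rw [Finset.mem_union, not_or] at hi
  obtain ⟨hiP, hiN⟩ := hi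
  have hiq : i ≠ q := fun h => hiN (h ▸ hq)
  fin_cases j <;> simp [balancedElement, integralEntry, fractionalEntry, hiP, hiN, hiq]

theorem disjoint_or_subset_of_sum_eq_zero (hcard : P.card = N.card) (hq : q ∈ N)
    (hint : ∑ i ∈ S, integralEntry P N i = 0) (hfrac : ∑ i ∈ S, fractionalEntry P q i = 0) :
    Disjoint S (P ∪ N) ∨ P ∪ N ⊆ S := by
  have hP : (P.card : ℝ) ≠ 0 :=
    Nat.cast_ne_zero.mpr (hcard ▸ Finset.card_ne_zero_of_mem hq)
  rw [sum_integralEntry, sub_eq_zero, Nat.cast_inj] at hint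
  rw [sum_fractionalEntry, sub_eq_zero, eq_div_iff hP] at hfrac
  rw [Finset.disjoint_union_right, Finset.union_subset_iff]
  by_cases hqS : q ∈ S
  · right
    have hSP : P.card = (S ∩ P).card := by simpa [hqS] using hfrac
    exact ⟨Finset.inter_eq_right.mp (Finset.eq_of_subset_of_card_le Finset.inter_subset_right
        hSP.le),
      Finset.inter_eq_right.mp (Finset.eq_of_subset_of_card_le Finset.inter_subset_right
        (by omega))⟩
  · left
    have hSP : (S ∩ P).card = 0 := by simpa [hqS, eq_comm] using hfrac
    simp only [Finset.disjoint_iff_inter_eq_empty, ← Finset.card_eq_zero]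
    exact ⟨hSP, hint ▸ hSP⟩

theorem brick_eq_zero_or_eq_of_conformalTo (hPN : Disjoint P N) (hq : q ∈ N)
    {y : ι × Fin 3 → ℝ} (hy : ConformalTo y (balancedElement P N q))
    (hsum : ∑ j, y (i, j) = 0) (hint : ∃ z : ℤ, y (i, 0) = z) :
    (fun j => y (i, j)) = 0 ∨ (fun j => y (i, j)) = fun j => balancedElement P N q (i, j) := by
  have hbrick : ConformalTo (fun j => y (i, j)) fun j => balancedElement P N q (i, j) :=
    fun j => hy (i, j)
  have hsum' := sum_balancedElement_brick P N q i
  by_cases hiP : i ∈ P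
  · exact hbrick.eq_zero_or_eq_of_apply_eq_one hsum hsum' hint (integralEntry_of_mem_left hPN hiP)
      fun j => balancedElement_nonpos hPN hq hiP
  by_cases hiN : i ∈ N
  · exact hbrick.eq_zero_or_eq_of_apply_eq_neg_one hsum hsum' hint
      (integralEntry_of_mem_right hPN hiN) fun j => balancedElement_nonneg hPN hiN
  · have hzero : (fun j => balancedElement P N q (i, j)) = 0 :=
      funext (balancedElement_eq_zero hq (by simp [hiP, hiN]))
    rw [hzero] at hbrick
    exact Or.inl hbrick.eq_zero

variable [Fintype ι]

theorem mixedKer_balancedElement (hcard : P.card = N.card) (hq : q ∈ N) :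
    MixedKer (transportationMatrix ι (Fin 3)) (Finset.univ.filter fun c => c.2 = 0)
      (balancedElement P N q) := by
  have hP : (P.card : ℝ) ≠ 0 :=
    Nat.cast_ne_zero.mpr (hcard ▸ Finset.card_ne_zero_of_mem hq)
  have hint : ∑ i, integralEntry P N i = 0 := by simp [sum_integralEntry, hcard]
  have hfrac : ∑ i, fractionalEntry P q i = 0 := by simp [sum_fractionalEntry, hP]
  refine mixedKer_transportationMatrix_iff.mpr
    ⟨fun j => ?_, sum_balancedElement_brick P N q, exists_int_integralEntry P N⟩
  fin_cases j
  · exact hint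
  · exact hfrac
  · simp [balancedElement, Finset.sum_sub_distrib, hint, hfrac]

theorem eq_zero_or_eq_balancedElement (hPN : Disjoint P N) (hcard : P.card = N.card) (hq : q ∈ N)
    {y : ι × Fin 3 → ℝ}
    (hker : MixedKer (transportationMatrix ι (Fin 3)) (Finset.univ.filter fun c => c.2 = 0) y)
    (hy : ConformalTo y (balancedElement P N q)) : y = 0 ∨ y = balancedElement P N q := by
  classical
  obtain ⟨hcol, hrow, hint⟩ := mixedKer_transportationMatrix_iff.mp hker
  let S : Finset ι := {i | (fun j => y (i, j)) ≠ 0}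
  have hyS : ∀ i j, y (i, j) = if i ∈ S then balancedElement P N q (i, j) else 0 := fun i j => by
    by_cases hi : (fun j => y (i, j)) = 0
    · simpa [S, hi] using congrFun hi j
    · have heq := (brick_eq_zero_or_eq_of_conformalTo hPN hq hy (hrow i) (hint i)).resolve_left hi
      simpa [S, hi] using congrFun heq j
  have hcolS : ∀ j, ∑ i ∈ S, balancedElement P N q (i, j) = 0 := fun j => by
    simpa only [hyS, Finset.sum_ite_mem, Finset.univ_inter] using hcol j
  rcases disjoint_or_subset_of_sum_eq_zero hcard hq (hcolS 0) (hcolS 1) with hdisj | hsub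
  · refine Or.inl (funext fun ⟨i, j⟩ => ?_)
    rw [hyS, Pi.zero_apply, ite_eq_right_iff]
    exact fun hi => balancedElement_eq_zero hq (Finset.disjoint_left.mp hdisj hi) j
  · refine Or.inr (funext fun ⟨i, j⟩ => ?_)
    rw [hyS, ite_eq_left_iff]
    exact fun hi => (balancedElement_eq_zero hq (fun hPNi => hi (hsub hPNi)) j).symm

theorem inMixedGraver_balancedElement (hPN : Disjoint P N) (hcard : P.card = N.card)
    (hq : q ∈ N) :
    InMixedGraver (transportationMatrix ι (Fin 3)) (Finset.univ.filter fun c => c.2 = 0)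
      (balancedElement P N q) := by
  have hq_ne : balancedElement P N q (q, 0) ≠ 0 := by
    simp [balancedElement, integralEntry_of_mem_right hPN hq]
  refine Or.inl ⟨mixedKer_balancedElement hcard hq, ⟨(q, 0), by simp, hq_ne⟩, ?_⟩
  intro y hker hy_zero hy_eq hconf
  exact (eq_zero_or_eq_balancedElement hPN hcard hq hker hconf).elim hy_zero hy_eq

theorem le_vnorm1_balancedElement (hPN : Disjoint P N) (q : ι) :
    2 * ((P.card : ℝ) + N.card) ≤ vnorm1 (balancedElement P N q) := by
  have hbrick : ∀ i ∈ P ∪ N, 2 ≤ ∑ j, |balancedElement P N q (i, j)| := fun i hi => by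
    have habs : |balancedElement P N q (i, 0)| = 1 := by
      rcases Finset.mem_union.mp hi with hi | hi
      · simp [balancedElement, integralEntry_of_mem_left hPN hi]
      · simp [balancedElement, integralEntry_of_mem_right hPN hi]
    simpa [habs] using
      two_mul_abs_le_sum_abs_of_sum_eq_zero (sum_balancedElement_brick P N q i) 0
  calc 2 * ((P.card : ℝ) + N.card) = ∑ _i ∈ P ∪ N, 2 := by
        rw [Finset.sum_const, Finset.card_union_of_disjoint hPN, nsmul_eq_mul, Nat.cast_add,
          mul_comm]
    _ ≤ ∑ i ∈ P ∪ N, ∑ j, |balancedElement P N q (i, j)| := Finset.sum_le_sum hbrick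
    _ ≤ ∑ i, ∑ j, |balancedElement P N q (i, j)| :=
        Finset.sum_le_univ_sum_of_nonneg fun i => Finset.sum_nonneg fun j _ => abs_nonneg _
    _ = vnorm1 (balancedElement P N q) :=
        (Fintype.sum_prod_type fun c => |balancedElement P N q c|).symm

end BalancedElement

theorem nfold_mixedGraver_lower_bound_general {ι : Type*} [Fintype ι] [DecidableEq ι]
    (hι : 2 ≤ Fintype.card ι) :
    ∃ g : ι × Fin 3 → ℝ,
      InMixedGraver (transportationMatrix ι (Fin 3)) (Finset.univ.filter fun c => c.2 = 0) g ∧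
      ((4 * (Fintype.card ι / 2) : ℕ) : ℝ) ≤ vnorm1 g := by
  obtain ⟨P, -, hP⟩ := Finset.exists_subset_card_eq (s := (Finset.univ : Finset ι))
    (n := Fintype.card ι / 2) (by rw [Finset.card_univ]; omega)
  obtain ⟨N, hNP, hN⟩ := Finset.exists_subset_card_eq (s := Pᶜ) (n := Fintype.card ι / 2)
    (by rw [Finset.card_compl]; omega)
  have hPN : Disjoint P N := Finset.subset_compl_iff_disjoint_left.mp hNP
  obtain ⟨q, hq⟩ : N.Nonempty := Finset.card_pos.mp (by omega)
  refine ⟨balancedElement P N q, inMixedGraver_balancedElement hPN (hP.trans hN.symm) hq, ?_⟩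
  have hnorm := le_vnorm1_balancedElement hPN q
  rw [hP, hN] at hnorm
  push_cast
  linarith

/-- for even `n ≥ 2`, the `n`-fold matrix with top blocks `I₃` and diagonal
blocks `(1,1,1)`, with the first coordinate of every brick integral, has a mixed Graver
basis element of `ℓ₁`-norm at least `n`. -/
theorem nfold_mixedGraver_lower_bound (n : ℕ) (hn : 2 ≤ n) (hev : Even n) :
    ∃ g : Fin n × Fin 3 → ℝ,
      InMixedGraver
        (Matrix.of fun (rw : Fin 3 ⊕ Fin n) (c : Fin n × Fin 3) =>
          match rw with
          | Sum.inl j => if c.2 = j then (1 : ℤ) else 0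
          | Sum.inr i => if c.1 = i then (1 : ℤ) else 0)
        (Finset.univ.filter fun c : Fin n × Fin 3 => c.2 = 0)
        g ∧
      (n : ℝ) ≤ vnorm1 g := by
  obtain ⟨g, hg, hnorm⟩ := nfold_mixedGraver_lower_bound_general (ι := Fin n) (by simpa using hn)
  exact ⟨g, by convert hg using 1; ext (j | i) c <;> rfl,
    (Nat.cast_le.mpr (by rw [Fintype.card_fin]; omega)).trans hnorm⟩
end

section
/- Let a ∈ ℝ with 0 < a < 1 and let g = (−1, a, 1−a) ∈ ℝ³. Then g₀ + g₁ + g₂ = 0 and g₀ ∈ ℤ, and g is ⊑-minimal in the mixed kernel of the row vector (1,1,1) with first coordinate integral: every y = (y₀, y₁, y₂) ∈ ℝ³ with y₀ ∈ ℤ, y₀ + y₁ + y₂ = 0, and y ⊑ g satisfies y = (0,0,0) or y = g. -/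
/-! Let `g k = -1` at the integral coordinate `k` and let the other coordinates of `g` be
nonnegative. If `y` is conformal to `g`, then `y k` is `0` or `-1`. In the first case `0 ≤ y`, in
the second `y ≤ g`, in every coordinate; since `0`, `y` and `g` all have coordinate sum `0`, the
inequality is an equality. -/

section Conformal

variable {ι R : Type*} [Ring R] [LinearOrder R] [IsStrictOrderedRing R]

/-- The conformal relation `x ⊑ y`: in each coordinate, `x` is at most as large as `y` in absolute
value and does not have the opposite sign. -/
def IsConformalTo (x y : ι → R) : Prop :=
  ∀ i, |x i| ≤ |y i| ∧ 0 ≤ x i * y i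

theorem IsConformalTo.mem_uIcc {x y : ι → R} (h : IsConformalTo x y) (i : ι) :
    x i ∈ Set.uIcc 0 (y i) := by
  obtain ⟨habs, hmul⟩ := h i
  obtain ⟨hx, hy⟩ | ⟨hx, hy⟩ := mul_nonneg_iff.mp hmul
  · rw [abs_of_nonneg hx, abs_of_nonneg hy] at habs
    exact Set.mem_uIcc_of_le hx habs
  · rw [abs_of_nonpos hx, abs_of_nonpos hy, neg_le_neg_iff] at habs
    exact Set.mem_uIcc_of_ge habs hx

theorem eq_zero_or_eq_neg_one_of_intCast_mem_Icc {z : ℤ} (hz : (z : R) ∈ Set.Icc (-1) 0) :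
    z = 0 ∨ z = -1 := by
  have hlower : -1 ≤ z := by exact_mod_cast hz.1
  have hupper : z ≤ 0 := by exact_mod_cast hz.2
  omega

theorem brick_conformal_minimal_general [Fintype ι] {g : ι → R} {k : ι} (hgk : g k = -1)
    (hg_nonneg : ∀ i ≠ k, 0 ≤ g i) (hg_sum : ∑ i, g i = 0) {y : ι → R}
    (hyk : ∃ z : ℤ, y k = z) (hy_sum : ∑ i, y i = 0) (hconf : IsConformalTo y g) :
    y = 0 ∨ y = g := by
  have hy_off : ∀ i ≠ k, y i ∈ Set.Icc 0 (g i) := fun i hi ↦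
    Set.uIcc_of_le (hg_nonneg i hi) ▸ hconf.mem_uIcc i
  obtain ⟨z, hz⟩ := hyk
  have hz_mem : (z : R) ∈ Set.Icc (-1) 0 := by
    simpa [hgk, hz] using hconf.mem_uIcc k
  obtain rfl | rfl := eq_zero_or_eq_neg_one_of_intCast_mem_Icc hz_mem
  · left
    have hy_nonneg : 0 ≤ y := fun i ↦ by
      obtain rfl | hi := eq_or_ne i k
      · simp [hz]
      · exact (hy_off i hi).1
    exact (Fintype.sum_eq_zero_iff_of_nonneg hy_nonneg).mp hy_sum
  · right
    have hy_le : y ≤ g := fun i ↦ by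
      obtain rfl | hi := eq_or_ne i k
      · simp [hz, hgk]
      · exact (hy_off i hi).2
    exact hy_le.eq_of_not_lt fun hlt ↦
      (Fintype.sum_strictMono hlt).ne (hy_sum.trans hg_sum.symm)

end Conformal

/-- for `0 < a < 1`, the vector `g = (−1, a, 1−a)` sums to zero, has
integral first coordinate, and is `⊑`-minimal in the mixed kernel of the row `(1,1,1)`
with first coordinate integral. -/
theorem brick_conformal_minimal (a : ℝ) (ha0 : 0 < a) (ha1 : a < 1) :
    let g : Fin 3 → ℝ := ![(-1 : ℝ), a, 1 - a]
    (g 0 + g 1 + g 2 = 0) ∧ (∃ z : ℤ, g 0 = z) ∧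
      ∀ y : Fin 3 → ℝ, (∃ z : ℤ, y 0 = z) → y 0 + y 1 + y 2 = 0 →
        (∀ i, |y i| ≤ |g i| ∧ 0 ≤ y i * g i) → y = 0 ∨ y = g := by
  intro g
  have hg_sum : g 0 + g 1 + g 2 = 0 := by simp [g]
  have hg_nonneg : ∀ i ≠ 0, 0 ≤ g i := by
    simp [g, Fin.forall_fin_succ, ha0.le, ha1.le]
  refine ⟨hg_sum, ⟨-1, by simp [g]⟩, fun y hy0 hy_sum hconf ↦ ?_⟩
  rw [← Fin.sum_univ_three] at hg_sum hy_sum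
  exact brick_conformal_minimal_general (g := g) rfl hg_nonneg hg_sum hy0 hy_sum hconf
end

section
/- (Steinitz Lemma) Let ‖·‖ be any norm on ℝ^d, and let x₁, …, x_n ∈ ℝ^d be vectors with ‖x_i‖ ≤ 1 for every i ∈ [n] and Σ_{i=1}^n x_i = 0. Then there exists a permutation π of [n] such that for every k ∈ [n], ‖Σ_{i=1}^k x_{π(i)}‖ ≤ d. -/
open BigOperators

/-!
The argument of Grinberg and Sevastyanov builds the ordering from its last element backwards. Let
`r` be the rank of the vectors. Call `S` compressible if `∑_S x i = ∑_S w i • x i` for weights in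
`[0, 1]` of total at most `r`; then `∑_S x i` has norm at most `r`. The full index set is
compressible with zero weights, and every nonempty compressible `S` stays so after the removal of
some element. This is clear if `S` has at most `r + 1` elements. Otherwise, interpolating with the
all-one weights brings the total up to exactly `r + 1`. The weights with this total form a polytope;
at an extreme point of it, the vectors with weights strictly between `0` and `1` are affinely
independent, so at most `r + 1` weights are fractional. If no weight were `1`, the nonzero weights
would be at most `r + 1` numbers less than `1` with sum `r + 1`, which is absurd. An index of
weight `1` can be removed: the total drops to `r`.
-/

open Filter Finset Topology

namespace Steinitz

section ExtremePoints

variable {V ι : Type*}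

lemma eq_zero_of_eventually_add_smul_mem [AddCommGroup V] [Module ℝ V] {A : Set V} {f g : V}
    (hf : f ∈ A.extremePoints ℝ) (h : ∀ᶠ t in 𝓝 (0 : ℝ), f + t • g ∈ A) : g = 0 := by
  have hneg : ∀ᶠ t in 𝓝 (0 : ℝ), f + (-t) • g ∈ A :=
    (continuous_neg.tendsto' (0 : ℝ) 0 neg_zero).eventually h
  obtain ⟨t, ⟨hadd, hsub⟩, ht⟩ :=
    (((h.and hneg).filter_mono nhdsWithin_le_nhds).and
      (self_mem_nhdsWithin : {0}ᶜ ∈ 𝓝[≠] (0 : ℝ))).exists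
  have hmid : f ∈ openSegment ℝ (f + t • g) (f + (-t) • g) :=
    ⟨1 / 2, 1 / 2, by norm_num, by norm_num, by norm_num, by module⟩
  have htg : t • g = 0 := by simpa using (mem_extremePoints.1 hf).2 _ hadd _ hsub hmid |>.1
  exact (smul_eq_zero.1 htg).resolve_left ht

lemma eventually_add_smul_mem_Icc [Finite ι] {a b f g : ι → ℝ} (hf : f ∈ Set.Icc a b)
    (hg : ∀ i, g i ≠ 0 → f i ∈ Set.Ioo (a i) (b i)) :
    ∀ᶠ t in 𝓝 (0 : ℝ), f + t • g ∈ Set.Icc a b := by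
  simp only [← Set.pi_univ_Icc, Set.mem_univ_pi, eventually_all]
  intro i
  by_cases hi : g i = 0
  · simpa [hi] using ⟨hf.1 i, hf.2 i⟩
  · have hcont : Tendsto (fun t : ℝ ↦ f i + t * g i) (𝓝 0) (𝓝 (f i)) :=
      Continuous.tendsto' (by fun_prop) _ _ (by simp)
    exact hcont.eventually (Icc_mem_nhds (hg i hi).1 (hg i hi).2)

end ExtremePoints

variable {ι E : Type*} [AddCommGroup E] [Module ℝ E] {x : ι → E} {S : Finset ι} {w : ι → ℝ} {c : ℝ}

lemma card_le_finrank_range_add_one [Finite ι] {F : Finset ι}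
    (h : AffineIndependent ℝ fun i : F ↦ x i) :
    F.card ≤ Set.finrank ℝ (Set.range x) + 1 := by
  have : FiniteDimensional ℝ (Submodule.span ℝ (Set.range x)) :=
    FiniteDimensional.span_of_finite ℝ (Set.finite_range x)
  have hspan : vectorSpan ℝ (Set.range fun i : F ↦ x i) ≤ Submodule.span ℝ (Set.range x) := by
    rw [vectorSpan_def, Submodule.span_le]
    rintro _ ⟨_, ⟨i, rfl⟩, _, ⟨j, rfl⟩, rfl⟩
    exact sub_mem (Submodule.subset_span ⟨i, rfl⟩) (Submodule.subset_span ⟨j, rfl⟩)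
  calc F.card = Fintype.card F := (Fintype.card_coe F).symm
    _ ≤ Module.finrank ℝ (vectorSpan ℝ (Set.range fun i : F ↦ x i)) + 1 := h.card_le_finrank_succ
    _ ≤ Set.finrank ℝ (Set.range x) + 1 := Nat.succ_le_succ (Submodule.finrank_mono hspan)

/-- The polytope of weights in `[0, 1]` with total `c` on `S` for which the weighted sum of the
vectors `x i` over `S` equals their plain sum. The condition is written in terms of the deficits
`1 - w i`, which makes it a linear equation; the weights outside `S` are only required to lie in
`[0, 1]`. -/
def weightPolytope (x : ι → E) (S : Finset ι) (c : ℝ) : Set (ι → ℝ) :=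
  {w ∈ Set.Icc 0 1 | ∑ i ∈ S, w i = c ∧ ∑ i ∈ S, (1 - w i) • x i = 0}

lemma isCompact_weightPolytope [Finite ι] (x : ι → E) (S : Finset ι) (c : ℝ) :
    IsCompact (weightPolytope x S c) := by
  let L : (ι → ℝ) →ₗ[ℝ] E := ∑ i ∈ S, (LinearMap.proj i).smulRight (x i)
  have hker : {w : ι → ℝ | ∑ i ∈ S, (1 - w i) • x i = 0} = (fun w ↦ 1 - w) ⁻¹' (L.ker : Set _) := by
    ext w
    simp [L]
  have hclosed : IsClosed {w : ι → ℝ | ∑ i ∈ S, (1 - w i) • x i = 0} :=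
    hker ▸ L.ker.closed_of_finiteDimensional.preimage (by fun_prop)
  exact isCompact_Icc.inter_right ((isClosed_eq (by fun_prop) continuous_const).inter hclosed)

lemma weightPolytope_nonempty_of_le (h : (weightPolytope x S c).Nonempty) {c' : ℝ} (hc : c ≤ c')
    (hc' : c' ≤ S.card) : (weightPolytope x S c').Nonempty := by
  obtain ⟨w, hw, hsum, hx⟩ := h
  obtain ⟨a, b, ha, hb, hab, rfl⟩ : c' ∈ segment ℝ c S.card := by
    rw [segment_eq_Icc (hc.trans hc')]
    exact ⟨hc, hc'⟩
  have hdeficit : ∀ i, 1 - (a • w + b • (1 : ι → ℝ)) i = a * (1 - w i) := fun i ↦ by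
    simp only [Pi.add_apply, Pi.smul_apply, Pi.one_apply, smul_eq_mul]
    linear_combination -hab
  refine ⟨a • w + b • 1, convex_Icc 0 1 hw ⟨zero_le_one, le_rfl⟩ ha hb hab, ?_, ?_⟩
  · simp [sum_add_distrib, ← mul_sum, hsum, mul_comm]
  · simp only [hdeficit, mul_smul, ← smul_sum, hx, smul_zero]

lemma eq_zero_of_mem_extremePoints_weightPolytope [Finite ι]
    (hw : w ∈ (weightPolytope x S c).extremePoints ℝ) {g : ι → ℝ}
    (hg : ∀ i, g i ≠ 0 → w i ∈ Set.Ioo 0 1) (hsum : ∑ i ∈ S, g i = 0)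
    (hx : ∑ i ∈ S, g i • x i = 0) : g = 0 := by
  obtain ⟨hw01, hwsum, hwx⟩ := hw.1
  refine eq_zero_of_eventually_add_smul_mem hw ?_
  filter_upwards [eventually_add_smul_mem_Icc hw01 hg] with t ht
  refine ⟨ht, ?_, ?_⟩
  · simp [sum_add_distrib, ← mul_sum, hwsum, hsum]
  · simp [← sub_sub, sub_smul _ (t * _), mul_smul, sum_sub_distrib, ← smul_sum, hwx, hx]

lemma affineIndependent_of_mem_extremePoints [Finite ι]
    (hw : w ∈ (weightPolytope x S c).extremePoints ℝ) {F : Finset ι} (hFS : F ⊆ S)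
    (hF : ∀ i ∈ F, w i ∈ Set.Ioo 0 1) : AffineIndependent ℝ fun i : F ↦ x i := by
  classical
  refine affineIndependent_iff.2 fun s u husum hux j hj ↦ ?_
  let g : ι → ℝ := Function.extend Subtype.val ((s : Set F).indicator u) 0
  have hg (i : F) : g i = (s : Set F).indicator u i := Subtype.val_injective.extend_apply _ _ i
  have hgF : ∀ i ∉ F, g i = 0 := fun i hi ↦
    Function.extend_apply' _ _ _ fun ⟨j, hj⟩ ↦ hi (hj ▸ j.2)
  have hgsum : ∑ i ∈ S, g i = 0 := calc
    ∑ i ∈ S, g i = ∑ i ∈ F, g i := (sum_subset hFS fun i _ hi ↦ hgF i hi).symm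
    _ = ∑ i : F, (s : Set F).indicator u i := by simp only [← sum_coe_sort F, hg]
    _ = 0 := by simpa [-univ_eq_attach, Set.indicator_apply, ← sum_filter] using husum
  have hgx : ∑ i ∈ S, g i • x i = 0 := calc
    ∑ i ∈ S, g i • x i = ∑ i ∈ F, g i • x i :=
      (sum_subset hFS fun i _ hi ↦ by rw [hgF i hi, zero_smul]).symm
    _ = ∑ i : F, (s : Set F).indicator u i • x i := by simp only [← sum_coe_sort F, hg]
    _ = 0 := by simpa [-univ_eq_attach, Set.indicator_apply, ite_smul, ← sum_filter] using hux
  have hgfrac : ∀ i, g i ≠ 0 → w i ∈ Set.Ioo 0 1 := fun i hi ↦ hF i (not_imp_comm.1 (hgF i) hi)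
  have hgzero : g = 0 := eq_zero_of_mem_extremePoints_weightPolytope hw hgfrac hgsum hgx
  simpa [hj, hgzero] using (hg j).symm

lemma exists_eq_one_of_mem_extremePoints [Finite ι]
    (hw : w ∈ (weightPolytope x S c).extremePoints ℝ)
    (hc : Set.finrank ℝ (Set.range x) + 1 ≤ c) : ∃ i ∈ S, w i = 1 := by
  obtain ⟨⟨hw0, hw1⟩, hsum, -⟩ := hw.1
  have hcpos : 0 < c := lt_of_lt_of_le (by positivity) hc
  by_contra! hne
  have hlt : ∀ i ∈ S, w i < 1 := fun i hi ↦ (hw1 i).lt_of_ne (hne i hi)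
  let F : Finset ι := {i ∈ S | w i ≠ 0}
  have hFS : F ⊆ S := filter_subset _ _
  have hFsum : ∑ i ∈ F, w i = c := (sum_filter_ne_zero S).trans hsum
  have hFne : F.Nonempty := nonempty_of_sum_ne_zero (f := w) (hFsum.trans_ne hcpos.ne')
  have hcard : F.card ≤ Set.finrank ℝ (Set.range x) + 1 :=
    card_le_finrank_range_add_one <| affineIndependent_of_mem_extremePoints hw hFS fun i hi ↦
      ⟨(hw0 i).lt_of_ne' (mem_filter.1 hi).2, hlt i (hFS hi)⟩
  have : c < c := calc
    c = ∑ i ∈ F, w i := hFsum.symm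
    _ < ∑ i ∈ F, 1 := sum_lt_sum_of_nonempty hFne fun i hi ↦ hlt i (hFS hi)
    _ = F.card := by simp
    _ ≤ Set.finrank ℝ (Set.range x) + 1 := by exact_mod_cast hcard
    _ ≤ c := hc
  exact this.false

/-- A set `S` of indices is compressible if the sum of the vectors `x i` over `S` is also a weighted
sum of them, with weights in `[0, 1]` whose total is at most the rank of the whole family. -/
def IsCompressible (x : ι → E) (S : Finset ι) : Prop :=
  ∃ c ≤ (Set.finrank ℝ (Set.range x) : ℝ), (weightPolytope x S c).Nonempty

lemma isCompressible_of_sum_eq_zero (h : ∑ i ∈ S, x i = 0) : IsCompressible x S :=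
  ⟨0, Nat.cast_nonneg _, 0, ⟨le_rfl, zero_le_one⟩, by simp, by simpa using h⟩

lemma isCompressible_of_card_le (h : S.card ≤ Set.finrank ℝ (Set.range x)) : IsCompressible x S :=
  ⟨S.card, by exact_mod_cast h, 1, ⟨zero_le_one, le_rfl⟩, by simp, by simp⟩

lemma IsCompressible.exists_erase [Finite ι] [DecidableEq ι] (h : IsCompressible x S)
    (hS : S.Nonempty) : ∃ i ∈ S, IsCompressible x (S.erase i) := by
  rcases le_or_gt S.card (Set.finrank ℝ (Set.range x) + 1) with hcard | hcard
  · obtain ⟨i, hi⟩ := hS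
    exact ⟨i, hi, isCompressible_of_card_le (by rw [card_erase_of_mem hi]; omega)⟩
  · obtain ⟨c, hc, hne⟩ := h
    have hne' : (weightPolytope x S (Set.finrank ℝ (Set.range x) + 1)).Nonempty :=
      weightPolytope_nonempty_of_le hne (by linarith) (by exact_mod_cast hcard.le)
    obtain ⟨w, hw⟩ := (isCompact_weightPolytope x S _).extremePoints_nonempty hne'
    obtain ⟨i, hi, hwi⟩ := exists_eq_one_of_mem_extremePoints hw le_rfl
    obtain ⟨hw01, hsum, hx⟩ := hw.1
    refine ⟨i, hi, _, le_rfl, w, hw01, ?_, ?_⟩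
    · rw [sum_erase_eq_sub hi, hsum, hwi, add_sub_cancel_right]
    · rw [sum_erase _ (by simp [hwi]), hx]

lemma IsCompressible.apply_sum_le {p : E → ℝ} (hsmul : ∀ c, 0 ≤ c → ∀ v, p (c • v) = c * p v)
    (hadd : ∀ v w, p (v + w) ≤ p v + p w) (hx : ∀ i, p (x i) ≤ 1) (h : IsCompressible x S) :
    p (∑ i ∈ S, x i) ≤ Set.finrank ℝ (Set.range x) := by
  obtain ⟨c, hc, w, hw, hsum, hdeficit⟩ := h
  have hp0 : p 0 ≤ 0 := by simpa using (hsmul 0 le_rfl 0).le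
  have hwx : ∑ i ∈ S, x i = ∑ i ∈ S, w i • x i := by
    simpa only [sub_smul, one_smul, sum_sub_distrib, sub_eq_zero] using hdeficit
  calc p (∑ i ∈ S, x i) = p (∑ i ∈ S, w i • x i) := by rw [hwx]
    _ ≤ ∑ i ∈ S, p (w i • x i) := le_sum_of_subadditive p hp0 hadd S _
    _ ≤ ∑ i ∈ S, w i := sum_le_sum fun i _ ↦ by
        rw [hsmul _ (hw.1 i)]
        exact mul_le_of_le_one_right (hw.1 i) (hx i)
    _ ≤ Set.finrank ℝ (Set.range x) := hsum.trans_le hc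

lemma exists_embedding_forall_map_Iic [DecidableEq ι] {Q : Finset ι → Prop}
    (hQ : ∀ S : Finset ι, S.Nonempty → Q S → ∃ i ∈ S, Q (S.erase i)) {n : ℕ} {S : Finset ι}
    (hcard : S.card = n) (hS : Q S) :
    ∃ e : Fin n ↪ ι, univ.map e = S ∧ ∀ k, Q ((Iic k).map e) := by
  induction n generalizing S with
  | zero => exact ⟨Function.Embedding.ofIsEmpty, by simp [card_eq_zero.1 hcard], fun k ↦ k.elim0⟩
  | succ n ih =>
    obtain ⟨i, hi, hQi⟩ := hQ S (card_pos.1 (by omega)) hS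
    obtain ⟨e, he, heQ⟩ := ih (by rw [card_erase_of_mem hi, hcard, Nat.add_sub_cancel]) hQi
    have hie : i ∉ Set.range e := fun ⟨j, hj⟩ ↦
      notMem_erase i S (he ▸ hj ▸ mem_map_of_mem e (mem_univ j))
    let e' : Fin (n + 1) ↪ ι := Fin.Embedding.snoc e hie
    have hrestrict : Fin.castSuccEmb.trans e' = e := by
      ext j
      simp [e']
    have huniv : univ.map e' = S := by
      rw [Fin.univ_castSuccEmb, cons_eq_insert, map_insert, Finset.map_map, hrestrict, he]
      simp [e', hi]
    refine ⟨e', huniv, Fin.lastCases ?_ fun k ↦ ?_⟩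
    · rwa [← Fin.top_eq_last, Iic_top, huniv]
    · rw [← Fin.map_castSuccEmb_Iic, Finset.map_map, hrestrict]
      exact heQ k

end Steinitz

open Steinitz

theorem steinitz_lemma_general {E : Type*} [AddCommGroup E] [Module ℝ E] {n : ℕ} {p : E → ℝ}
    (hsmul : ∀ c, 0 ≤ c → ∀ v, p (c • v) = c * p v) (hadd : ∀ v w, p (v + w) ≤ p v + p w)
    {x : Fin n → E} (hx : ∀ i, p (x i) ≤ 1) (hsum : ∑ i, x i = 0) :
    ∃ π : Equiv.Perm (Fin n), ∀ k : Fin n,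
      p (∑ i ∈ univ.filter fun i ↦ i ≤ k, x (π i)) ≤ Set.finrank ℝ (Set.range x) := by
  obtain ⟨e, -, he⟩ := exists_embedding_forall_map_Iic
    (fun _ hne hS ↦ hS.exists_erase hne) (card_fin n) (isCompressible_of_sum_eq_zero hsum)
  refine ⟨e.equivOfFiniteSelfEmbedding, fun k ↦ ?_⟩
  have hk := (he k).apply_sum_le hsmul hadd hx
  rw [sum_map] at hk
  rwa [filter_ge_eq_Iic]

/-- Steinitz Lemma: vectors of norm at most 1 summing to zero can be
permuted so that all prefix sums have norm at most `d`, for any norm on `ℝ^d`. -/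
theorem steinitz_lemma (d n : ℕ) (Nrm : (Fin d → ℝ) → ℝ)
    (hdef : ∀ v, Nrm v = 0 ↔ v = 0)
    (hadd : ∀ v w, Nrm (v + w) ≤ Nrm v + Nrm w)
    (hsmul : ∀ (c : ℝ) (v), Nrm (c • v) = |c| * Nrm v)
    (x : Fin n → Fin d → ℝ) (hx : ∀ i, Nrm (x i) ≤ 1)
    (hsum : ∑ i, x i = 0) :
    ∃ π : Equiv.Perm (Fin n), ∀ k : Fin n,
      Nrm (∑ i ∈ Finset.univ.filter fun i => i ≤ k, x (π i)) ≤ d := by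
  have hrank : Set.finrank ℝ (Set.range x) ≤ d :=
    (Submodule.finrank_le _).trans_eq (Module.finrank_fin_fun ℝ)
  obtain ⟨π, hπ⟩ :=
    steinitz_lemma_general (fun c hc v ↦ by rw [hsmul, abs_of_nonneg hc]) hadd hx hsum
  exact ⟨π, fun k ↦ (hπ k).trans (Nat.cast_le.2 hrank)⟩
end

section
/- There exists a function f : ℕ × ℕ → ℕ such that the following holds for all positive integers d, Δ, n. Let T₁, …, T_n be finite multisets of vectors of ℤ^d, each vector of ℓ∞-norm at most Δ, let b ∈ ℤ^d, and let ε be a positive integer such that ‖(Σ_{v ∈ T_i} v) − b‖∞ < ε for all i ∈ [n]. If ‖b‖∞ > ε · f(d, Δ), then there exist non-empty sub-multisets S_i ⊆ T_i for all i ∈ [n] and a vector b' ∈ ℤ^d with ‖b'‖∞ ≤ f(d, Δ) such that Σ_{v ∈ S_i} v = b' for every i ∈ [n]. -/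
open BigOperators

/-!
By Gordan's lemma the solutions `(x, p, q)` of `A x + q = p`, for an additive map `A` into `ℤ^κ` on
a finitely generated monoid, form a finitely generated monoid, and an inequality between a norm of
an additive map and a multiple of an additive map holds everywhere once it holds on generators.
Hence an additive map vanishing where `A` vanishes is bounded by a multiple of `‖A‖`. Applied to
`A (x, b) = (x i - b)_i` on `(∏ i, N i) × ℤ^κ`, this says that finitely many finitely generated
submonoids `N i` of `ℤ^κ` either share a nonzero vector, or every vector `b` within distance `E` of
all of them has norm at most `C * E`.

The multisets consist of vectors from a fixed finite set `W`. Take for the `N i` the monoids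
generated by those vectors whose multiplicity in `T i` exceeds a threshold `C`. There are only
finitely many families of subsets of `W`, so one `C` serves for all of them. Discarding the
remaining vectors changes the sums by a bounded amount, hence a large `b` rules out the second
alternative. In the first, the common vector is, for each `i`, a sum of at most `C` of the frequent
vectors, and any such collection is a sub-multiset of `T i`.
-/

open Filter
open scoped NNReal

section LinearBounds

variable {M V : Type*} [AddCommMonoid M] [AddMonoid.FG M] [SeminormedAddCommGroup V]

lemma fg_eqLocusM_of_fg {N : Type*} [AddMonoid N] [IsCancelAdd N] (f g : M →+ N) :
    (f.eqLocusM g).FG := by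
  obtain ⟨n, h, hh⟩ :=
    AddSubmonoid.fg_iff_exists_fin_addMonoidHom.1 (AddMonoid.FG.fg_top (M := M))
  have heq : ((f.comp h).eqLocusM (g.comp h)).map h = f.eqLocusM g :=
    AddSubmonoid.map_comap_eq_of_surjective (S := f.eqLocusM g) (AddMonoidHom.mrange_eq_top.1 hh)
  exact heq ▸ (AddSubmonoid.fg_eqLocusM _ _).map h

lemma exists_nnnorm_le_mul_of_fg (σ : M →+ ℕ) (φ : M →+ V) (hφ : ∀ m, σ m = 0 → φ m = 0) :
    ∃ C : ℝ≥0, ∀ m, ‖φ m‖₊ ≤ C * σ m := by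
  obtain ⟨s, hs⟩ := AddMonoid.FG.fg_top (M := M)
  refine ⟨∑ g ∈ s, ‖φ g‖₊, fun m => ?_⟩
  have hm : m ∈ AddSubmonoid.closure (s : Set M) := hs ▸ AddSubmonoid.mem_top m
  induction hm using AddSubmonoid.closure_induction with
  | mem g hg =>
    rcases Nat.eq_zero_or_pos (σ g) with h0 | hpos
    · simp [hφ g h0]
    · calc ‖φ g‖₊ ≤ ∑ g ∈ s, ‖φ g‖₊ :=
            Finset.single_le_sum (f := fun g => ‖φ g‖₊) (fun _ _ => zero_le) hg
        _ ≤ (∑ g ∈ s, ‖φ g‖₊) * σ g := le_mul_of_one_le_right' (by exact_mod_cast hpos)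
  | zero => simp
  | add x y _ _ hx hy =>
    calc ‖φ (x + y)‖₊ ≤ ‖φ x‖₊ + ‖φ y‖₊ := by rw [map_add]; exact nnnorm_add_le _ _
      _ ≤ _ := add_le_add hx hy
      _ = _ := by rw [map_add, Nat.cast_add, mul_add]

lemma exists_nnnorm_le_mul_of_map_eq {N H : Type*} [AddCommMonoid N] [AddMonoid.FG N]
    [AddMonoid H] [IsCancelAdd H] (A : M →+ H) (B : N →+ H) (φ : M →+ V) (σ : N →+ ℕ)
    (hσ : ∀ n, σ n = 0 → n = 0) (hφ : ∀ m, A m = 0 → φ m = 0) :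
    ∃ C : ℝ≥0, ∀ m n, A m = B n → ‖φ m‖₊ ≤ C * σ n := by
  let P : AddSubmonoid (M × N) :=
    (A.comp (AddMonoidHom.fst M N)).eqLocusM (B.comp (AddMonoidHom.snd M N))
  have hP : AddMonoid.FG P := (AddMonoid.fg_iff_addSubmonoid_fg P).2 (fg_eqLocusM_of_fg _ _)
  obtain ⟨C, hC⟩ := exists_nnnorm_le_mul_of_fg
    ((σ.comp (AddMonoidHom.snd M N)).comp P.subtype)
    ((φ.comp (AddMonoidHom.fst M N)).comp P.subtype) <| by
      rintro ⟨⟨m, n⟩, hmn : A m = B n⟩ (h0 : σ n = 0)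
      exact hφ m (by rw [hmn, hσ n h0, map_zero])
  exact ⟨C, fun m n hmn => hC ⟨(m, n), hmn⟩⟩

lemma exists_nnnorm_le_mul_nnnorm {κ : Type*} [Fintype κ] (A : M →+ (κ → ℤ)) (φ : M →+ V)
    (hφ : ∀ m, A m = 0 → φ m = 0) : ∃ C : ℝ≥0, ∀ m, ‖φ m‖₊ ≤ C * ‖A m‖₊ := by
  let diff : (κ → ℕ) × (κ → ℕ) →+ (κ → ℤ) :=
    { toFun := fun e k => (e.1 k : ℤ) - e.2 k
      map_zero' := by ext; simp
      map_add' := fun e e' => by ext; simp [add_sub_add_comm] }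
  let size : (κ → ℕ) × (κ → ℕ) →+ ℕ :=
    { toFun := fun e => ∑ k, (e.1 k + e.2 k)
      map_zero' := by simp
      map_add' := fun e e' => by simp [← Finset.sum_add_distrib, add_add_add_comm] }
  have hsize (e) (he : size e = 0) : e = 0 := by
    have he' : ∑ k, (e.1 k + e.2 k) = 0 := he
    simp only [Finset.sum_eq_zero_iff, Finset.mem_univ, true_imp_iff, Nat.add_eq_zero_iff] at he'
    exact Prod.ext (funext fun k => (he' k).1) (funext fun k => (he' k).2)
  obtain ⟨C, hC⟩ := exists_nnnorm_le_mul_of_map_eq A diff φ size hsize hφ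
  refine ⟨C * Fintype.card κ, fun m => ?_⟩
  let e : (κ → ℕ) × (κ → ℕ) := (fun k => (A m k).toNat, fun k => (-A m k).toNat)
  have hdiff : A m = diff e := funext fun k => (Int.toNat_sub_toNat_neg (A m k)).symm
  have hsum : (size e : ℝ≥0) = ∑ k, ‖A m k‖₊ := by
    change ((∑ k, ((A m k).toNat + (-A m k).toNat) : ℕ) : ℝ≥0) = _
    simp only [Nat.cast_sum, Nat.cast_add, Int.toNat_add_toNat_neg_eq_nnnorm]
  calc ‖φ m‖₊ ≤ C * size e := hC m e hdiff
    _ = C * ∑ k, ‖A m k‖₊ := by rw [hsum]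
    _ ≤ C * (Fintype.card κ • ‖A m‖₊) := by gcongr; exact Pi.sum_nnnorm_apply_le_nnnorm _
    _ = C * Fintype.card κ * ‖A m‖₊ := by rw [nsmul_eq_mul, mul_assoc]

end LinearBounds

section FrequentPart

variable {α : Type*} [DecidableEq α]

/-- The sub-multiset of `T` formed by the elements of multiplicity greater than `t`, kept with their
full multiplicity. Every multiset of at most `t` such elements is contained in `T`. -/
def frequentPart (t : ℕ) (T : Multiset α) : Multiset α := T.filter (t < T.count ·)

lemma le_of_forall_mem_frequentPart {t : ℕ} {S T : Multiset α} (hS : S.card ≤ t)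
    (h : ∀ v ∈ S, v ∈ frequentPart t T) : S ≤ T := by
  refine Multiset.le_iff_count.2 fun v => ?_
  by_cases hv : v ∈ S
  · exact (S.count_le_card v).trans (hS.trans (Multiset.mem_filter.1 (h v hv)).2.le)
  · simp [Multiset.count_eq_zero_of_notMem hv]

lemma card_filter_count_le (t : ℕ) (T : Multiset α) :
    (T.filter (T.count · ≤ t)).card ≤ T.toFinset.card * t := by
  rw [← Multiset.toFinset_sum_count_eq]
  calc ∑ v ∈ (T.filter (T.count · ≤ t)).toFinset, (T.filter (T.count · ≤ t)).count v
      ≤ (T.filter (T.count · ≤ t)).toFinset.card * t := by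
        refine Finset.sum_le_card_nsmul _ _ _ fun v hv => ?_
        exact (Multiset.count_le_of_le v (Multiset.filter_le _ _)).trans
          (Multiset.mem_filter.1 (Multiset.mem_toFinset.1 hv)).2
    _ ≤ T.toFinset.card * t := by
        gcongr
        exact Multiset.toFinset_subset.2 (Multiset.filter_subset _ _)

lemma nnnorm_sum_frequentPart_sub_sum_le {V : Type*} [SeminormedAddCommGroup V] [DecidableEq V]
    (t : ℕ) {T : Multiset V} {r : ℝ≥0} (hr : ∀ v ∈ T, ‖v‖₊ ≤ r) :
    ‖(frequentPart t T).sum - T.sum‖₊ ≤ T.toFinset.card * t * r := by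
  have hsplit : (frequentPart t T).sum - T.sum = -(T.filter (T.count · ≤ t)).sum := by
    have h := congrArg Multiset.sum (Multiset.filter_add_not (t < T.count ·) T)
    simp only [Multiset.sum_add, not_lt] at h
    rw [← h, frequentPart, sub_add_cancel_left]
  calc ‖(frequentPart t T).sum - T.sum‖₊ = ‖(T.filter (T.count · ≤ t)).sum‖₊ := by
        rw [hsplit, nnnorm_neg]
    _ ≤ ((T.filter (T.count · ≤ t)).map (‖·‖₊)).sum :=
        Multiset.le_sum_of_subadditive _ nnnorm_zero.le nnnorm_add_le _
    _ ≤ (T.filter (T.count · ≤ t)).card * r := by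
        rw [← nsmul_eq_mul, ← Multiset.card_map (‖·‖₊)]
        refine Multiset.sum_le_card_nsmul _ _ fun x hx => ?_
        obtain ⟨v, hv, rfl⟩ := Multiset.mem_map.1 hx
        exact hr v (Multiset.mem_of_mem_filter hv)
    _ ≤ T.toFinset.card * t * r := by
        gcongr
        exact_mod_cast card_filter_count_le t T

lemma exists_nnnorm_sum_frequentPart_sub_sum_le {V : Type*} [SeminormedAddCommGroup V]
    [DecidableEq V] (t : ℕ) {W : Set V} (hW : W.Finite) :
    ∃ D : ℝ≥0, ∀ T : Multiset V, (∀ v ∈ T, v ∈ W) →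
      ‖(frequentPart t T).sum - T.sum‖₊ ≤ D := by
  refine ⟨hW.toFinset.card * t * ∑ v ∈ hW.toFinset, ‖v‖₊, fun T hT => ?_⟩
  have hnorm : ∀ v ∈ T, ‖v‖₊ ≤ ∑ w ∈ hW.toFinset, ‖w‖₊ := fun v hv =>
    Finset.single_le_sum (f := (‖·‖₊)) (fun _ _ => zero_le) (hW.mem_toFinset.2 (hT v hv))
  have hsub : T.toFinset ⊆ hW.toFinset := fun v hv =>
    hW.mem_toFinset.2 (hT v (Multiset.mem_toFinset.1 hv))
  exact (nnnorm_sum_frequentPart_sub_sum_le t hnorm).trans (by gcongr)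

end FrequentPart

section CommonSums

variable {κ : Type*} [Fintype κ]

lemma exists_nnnorm_le_mul_of_iInf_eq_bot {ι : Type*} [Finite ι] (N : ι → AddSubmonoid (κ → ℤ))
    [∀ i, AddMonoid.FG (N i)] (hN : ⨅ i, N i = ⊥) :
    ∃ C : ℝ≥0, ∀ (b : κ → ℤ) (E : ℝ≥0), (∀ i, ∃ x ∈ N i, ‖x - b‖₊ ≤ E) → ‖b‖₊ ≤ C * E := by
  cases nonempty_fintype ι
  let A : (∀ i, N i) × (κ → ℤ) →+ (ι × κ → ℤ) :=
    { toFun := fun m j => (m.1 j.1 : κ → ℤ) j.2 - m.2 j.2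
      map_zero' := by ext; simp
      map_add' := fun m m' => by ext; simp [add_sub_add_comm] }
  obtain ⟨C, hC⟩ := exists_nnnorm_le_mul_nnnorm A (AddMonoidHom.snd (∀ i, N i) (κ → ℤ)) <| by
    rintro ⟨x, b⟩ h0
    have hx (i : ι) : (x i : κ → ℤ) = b := funext fun k => sub_eq_zero.1 (congrFun h0 (i, k))
    have hb : b ∈ ⨅ i, N i := AddSubmonoid.mem_iInf.2 fun i => hx i ▸ (x i).2
    simpa [hN] using hb
  refine ⟨C, fun b E hE => ?_⟩
  choose x hxN hxE using hE
  let m : (∀ i, N i) × (κ → ℤ) := (fun i => ⟨x i, hxN i⟩, b)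
  have hm : ‖A m‖₊ ≤ E := pi_nnnorm_le_iff.2 fun j =>
    (nnnorm_le_pi_nnnorm (x j.1 - b) j.2).trans (hxE j.1)
  exact (hC m).trans (by gcongr)

lemma eventually_common_sum_or_nnnorm_le (𝓛 : Set (Set (κ → ℤ))) [Finite 𝓛]
    (h𝓛 : ∀ L ∈ 𝓛, L.Finite) :
    ∀ᶠ C : ℕ in atTop,
      (∃ w : κ → ℤ, w ≠ 0 ∧ ‖w‖₊ ≤ C ∧
        ∀ L ∈ 𝓛, ∃ S : Multiset (κ → ℤ), (∀ v ∈ S, v ∈ L) ∧ S.card ≤ C ∧ S.sum = w) ∨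
      ∀ (b : κ → ℤ) (E : ℝ≥0),
        (∀ L ∈ 𝓛, ∃ x ∈ AddSubmonoid.closure L, ‖x - b‖₊ ≤ E) → ‖b‖₊ ≤ C * E := by
  have (L : 𝓛) : Finite (L : Set (κ → ℤ)) := h𝓛 L L.2
  rcases eq_or_ne (⨅ L : 𝓛, AddSubmonoid.closure (L : Set (κ → ℤ))) ⊥ with h | h
  · obtain ⟨C₀, hC₀⟩ := exists_nnnorm_le_mul_of_iInf_eq_bot _ h
    filter_upwards [eventually_ge_atTop ⌈C₀⌉₊] with C hC
    exact .inr fun b E hE => (hC₀ b E fun L => hE L L.2).trans <| by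
      gcongr
      exact Nat.ceil_le.1 hC
  · obtain ⟨w, hw, hw0⟩ := (AddSubmonoid.bot_or_exists_ne_zero _).resolve_left h
    choose S hSL hSw using fun L : 𝓛 =>
      AddSubmonoid.exists_multiset_of_mem_closure (AddSubmonoid.mem_iInf.1 hw L)
    filter_upwards [eventually_ge_atTop ⌈‖w‖₊⌉₊,
      eventually_all.2 fun L => eventually_ge_atTop (S L).card] with C hwC hSC
    exact .inl ⟨w, hw0, Nat.ceil_le.1 hwC, fun L hL =>
      ⟨S ⟨L, hL⟩, hSL _, hSC _, hSw _⟩⟩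

lemma exists_common_submultiset_sum_or_nnnorm_le {W : Set (κ → ℤ)} (hW : W.Finite) :
    ∃ C : ℕ, ∀ {ι : Type*} (T : ι → Multiset (κ → ℤ)), (∀ i, ∀ v ∈ T i, v ∈ W) →
      (∃ S : ι → Multiset (κ → ℤ), (∀ i, S i ≠ 0 ∧ S i ≤ T i) ∧
        ∃ w : κ → ℤ, ‖w‖₊ ≤ C ∧ ∀ i, (S i).sum = w) ∨
      ∀ (b : κ → ℤ) (E : ℝ≥0), (∀ i, ‖(T i).sum - b‖₊ ≤ E) → ‖b‖₊ ≤ C * (E + 1) := by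
  classical
  obtain ⟨C, hC⟩ := ((eventually_all_finite hW.finite_subsets.finite_subsets).2 fun 𝓛 h𝓛 =>
    have : Finite 𝓛 := hW.finite_subsets.subset h𝓛
    eventually_common_sum_or_nnnorm_le 𝓛 fun L hL => hW.subset (h𝓛 hL)).exists
  obtain ⟨D, hD⟩ := exists_nnnorm_sum_frequentPart_sub_sum_le C hW
  refine ⟨C + ⌈C * D⌉₊, fun {ι} T hT => ?_⟩
  let 𝓛 : Set (Set (κ → ℤ)) := Set.range fun i => {v | v ∈ frequentPart C (T i)}
  have h𝓛 : 𝓛 ⊆ {L | L ⊆ W} :=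
    Set.range_subset_iff.2 fun i v hv => hT i v (Multiset.mem_of_mem_filter hv)
  rcases hC 𝓛 h𝓛 with ⟨w, hw0, hwC, hw⟩ | hb
  · choose S hSL hSC hSw using fun i => hw _ (Set.mem_range_self i)
    refine .inl ⟨S, fun i => ⟨?_, le_of_forall_mem_frequentPart (hSC i) (hSL i)⟩, w, ?_, hSw⟩
    · rintro h0
      exact hw0 (by rw [← hSw i, h0, Multiset.sum_zero])
    · exact hwC.trans (by gcongr; exact Nat.le_add_right _ _)
  · refine .inr fun b E hE => ?_
    have hclose : ∀ L ∈ 𝓛, ∃ x ∈ AddSubmonoid.closure L, ‖x - b‖₊ ≤ D + E := by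
      rintro _ ⟨i, rfl⟩
      refine ⟨_, AddSubmonoid.multiset_sum_mem _ (frequentPart C (T i)) fun v hv =>
        AddSubmonoid.subset_closure hv, ?_⟩
      rw [← sub_add_sub_cancel _ (T i).sum]
      exact (nnnorm_add_le _ _).trans (add_le_add (hD _ (hT i)) (hE i))
    calc ‖b‖₊ ≤ C * (D + E) := hb b _ hclose
      _ = C * E + C * D := by rw [mul_add, add_comm]
      _ ≤ C * (E + 1) + ⌈C * D⌉₊ * (E + 1) := add_le_add
        (by gcongr; exact le_self_add)
        ((Nat.le_ceil _).trans (le_mul_of_one_le_right' le_add_self))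
      _ = (C + ⌈C * D⌉₊ : ℕ) * (E + 1) := by rw [Nat.cast_add, add_mul]

lemma nnnorm_le_natCast_iff {v : κ → ℤ} {n : ℕ} : ‖v‖₊ ≤ n ↔ ∀ k, |v k| ≤ n := by
  refine pi_nnnorm_le_iff.trans (forall_congr' fun k => ?_)
  rw [← NNReal.natCast_natAbs, Nat.cast_le, Int.abs_eq_natAbs, Int.ofNat_le]

end CommonSums

theorem common_submultiset_sums_general {κ : Type*} [Finite κ] (Δ : ℕ) :
    ∃ C : ℕ, ∀ {ι : Type*} (T : ι → Multiset (κ → ℤ)), (∀ i, ∀ v ∈ T i, ∀ k, |v k| ≤ (Δ : ℤ)) →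
      ∀ (b : κ → ℤ) (ε : ℕ), 0 < ε →
        (∀ i k, |(T i).sum k - b k| < (ε : ℤ)) →
        (∃ k, (ε : ℤ) * (C : ℤ) < |b k|) →
        ∃ S : ι → Multiset (κ → ℤ),
          (∀ i, S i ≠ 0 ∧ S i ≤ T i) ∧
          ∃ b' : κ → ℤ, (∀ k, |b' k| ≤ (C : ℤ)) ∧ ∀ i, (S i).sum = b' := by
  cases nonempty_fintype κ
  have hbox : {v : κ → ℤ | ∀ k, v k ∈ Set.Icc (-(Δ : ℤ)) Δ}.Finite :=
    Set.Finite.pi' fun _ => Set.finite_Icc _ _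
  obtain ⟨C, hC⟩ := exists_common_submultiset_sum_or_nnnorm_le hbox
  refine ⟨2 * C, fun T hT b ε hε hTb ⟨k, hk⟩ => ?_⟩
  rcases hC T fun i v hv k => abs_le.1 (hT i v hv k) with ⟨S, hS, w, hw, hSw⟩ | hb
  · refine ⟨S, hS, w, fun k => (nnnorm_le_natCast_iff.1 hw k).trans ?_, hSw⟩
    exact_mod_cast Nat.le_mul_of_pos_left C two_pos
  · have hbC : ‖b‖₊ ≤ (C * (ε + 1) : ℕ) := by
      exact_mod_cast hb b ε fun i => nnnorm_le_natCast_iff.2 fun k => (hTb i k).le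
    refine absurd (hk.trans_le (nnnorm_le_natCast_iff.1 hbC k)) (not_lt.2 ?_)
    exact_mod_cast (by nlinarith : C * (ε + 1) ≤ ε * (2 * C))

/-- after Cslovjecsek, Eisenbrand, Pilipczuk, Venzin, Weismantel:
if `n` multisets of short integer vectors all have sums within `ε` of a common large
vector `b`, then one can pick nonempty sub-multisets of each that all have the same
small sum `b'`. -/
theorem common_submultiset_sums :
    ∃ f : ℕ → ℕ → ℕ,
      ∀ (d Δ n : ℕ), 0 < d → 0 < Δ → 0 < n →
      ∀ T : Fin n → Multiset (Fin d → ℤ),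
        (∀ i, ∀ v ∈ T i, ∀ k, |v k| ≤ (Δ : ℤ)) →
      ∀ (b : Fin d → ℤ) (ε : ℕ), 0 < ε →
        (∀ i k, |(T i).sum k - b k| < (ε : ℤ)) →
        (∃ k, (ε : ℤ) * (f d Δ : ℤ) < |b k|) →
        ∃ S : Fin n → Multiset (Fin d → ℤ),
          (∀ i, S i ≠ 0 ∧ S i ≤ T i) ∧
          ∃ b' : Fin d → ℤ, (∀ k, |b' k| ≤ (f d Δ : ℤ)) ∧ ∀ i, (S i).sum = b' := by
  choose f hf using fun d => common_submultiset_sums_general (κ := Fin d)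
  exact ⟨f, fun d Δ n _ _ _ => hf d Δ⟩
end
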